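/- arXiv:1809.08584 — 4 statements merged into one kernel-verified Lean document; each statement's English description precedes it below -/
import Mathlib

section
/- Let r ≥ 1, m ≥ 2 and q ≥ 2 be integers. If gcd(m−1, q) does not divide r, then there are zero conjugacy classes of elements of order q in the Brown–Thompson group T_{r,m}; that is, T_{r,m} contains no element of order q. -/
/-!
Put `g = gcd(m - 1, q)`. Since `m ≡ 1` modulo `g`, multiplying an element of `ℤ[1/m]` by a power of
`m` does not change its class modulo `g ℤ[1/m]`. Hence a lift `F` of an element of `T_{r,m}`
preserves `ℤ[1/m]`, and `F x - x` has the same class as `F 0` for every `x ∈ ℤ[1/m]`: this class is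
unchanged along each affine piece, and adjacent pieces share an endpoint
(`IsPLmLift.map_sub_mem`). Iterating, `F^[q] 0 ≡ q F(0) ≡ 0` modulo `g ℤ[1/m]`.

If `f` has order `q`, then `F^[q]` is the translation by `k r` for a single integer `k`
(`exists_iterate_eq_add`), and `k` is prime to `q`: if `d` divides both, then `F^[q/d]` and the
translation by `(k/d) r` are commuting increasing maps with the same `d`-th iterate, so they are
equal, `f^(q/d) = 1` and `d = 1` (`isCoprime_of_iterate_eq_add`). Now `g ∣ k r`, because
`g ℤ[1/m] ∩ ℤ = g ℤ` as `g` is prime to `m`, and `g` is prime to `k`, so `g ∣ r`.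
-/

open Filter Topology

/-- The set `ℤ[1/m] = {N·m^s : N, s ∈ ℤ}` as a subset of `ℝ`. -/
def ZInvM (m : ℕ) : Set ℝ := {x : ℝ | ∃ N s : ℤ, x = (N : ℝ) * (m : ℝ) ^ s}

/-- `F : ℝ → ℝ` is a lift of an orientation-preserving `PL_m` homeomorphism from the
circle `ℝ/rℤ` to the circle `ℝ/r'ℤ`: it is strictly increasing, commutes appropriately
with the translations, and is affine on the pieces of a finite subdivision
`0 = a₀ < a₁ < ... < aₙ = r` of `[0, r]`, with slopes powers of `m`, breakpoints in
`ℤ[1/m]` and images of breakpoints in `ℤ[1/m]`. -/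
def IsPLmLift (m : ℕ) (r r' : ℝ) (F : ℝ → ℝ) : Prop :=
  StrictMono F ∧ (∀ x : ℝ, F (x + r) = F x + r') ∧
    ∃ (n : ℕ) (a : Fin (n + 1) → ℝ),
      StrictMono a ∧ a 0 = 0 ∧ a (Fin.last n) = r ∧
      (∀ i, a i ∈ ZInvM m) ∧ (∀ i, F (a i) ∈ ZInvM m) ∧
      ∀ i : Fin n, ∃ (s : ℤ) (β : ℝ),
        ∀ x ∈ Set.Icc (a i.castSucc) (a i.succ), F x = (m : ℝ) ^ s * x + β

/-- Membership in the Brown–Thompson group `T_{r,m}`, viewed inside the permutations of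
the circle `ℝ/rℤ`: `f` is induced by a `PL_m` lift. -/
def InT (r m : ℕ) (f : Equiv.Perm (AddCircle (r : ℝ))) : Prop :=
  ∃ F : ℝ → ℝ, IsPLmLift m r r F ∧ ∀ x : ℝ, f ↑x = ↑(F x)

/-- The subgroup `g ℤ[1/m]` of `ℝ`, described as the set of `x` for which some `m ^ t * x` is an
integer multiple of `g`; with `g = 1` this is `ℤ[1/m]`. (The description is the intended one for
`m ≠ 0`.) -/
def mulZInv (m g : ℕ) : AddSubgroup ℝ where
  carrier := {x | ∃ (N : ℤ) (t : ℕ), x * (m : ℝ) ^ t = g * N}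
  zero_mem' := ⟨0, 0, by simp⟩
  add_mem' := by
    rintro x y ⟨N, t, h⟩ ⟨N', t', h'⟩
    refine ⟨N * m ^ t' + N' * m ^ t, t + t', ?_⟩
    push_cast
    rw [pow_add]
    linear_combination (m : ℝ) ^ t' * h + (m : ℝ) ^ t * h'
  neg_mem' := by
    rintro x ⟨N, t, h⟩
    refine ⟨-N, t, ?_⟩
    push_cast
    linear_combination -h

lemma mem_mulZInv {m g : ℕ} {x : ℝ} :
    x ∈ mulZInv m g ↔ ∃ (N : ℤ) (t : ℕ), x * (m : ℝ) ^ t = g * N := Iff.rfl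

lemma mulZInv_le (m g : ℕ) : mulZInv m g ≤ mulZInv m 1 := by
  rintro x ⟨N, t, h⟩
  exact ⟨g * N, t, by rw [h]; push_cast; ring⟩

lemma mul_mem_mulZInv {m g : ℕ} {x : ℝ} (c : ℕ) (hc : g ∣ c) (hx : x ∈ mulZInv m 1) :
    (c : ℝ) * x ∈ mulZInv m g := by
  obtain ⟨N, t, h⟩ := hx
  obtain ⟨e, rfl⟩ := hc
  refine ⟨e * N, t, ?_⟩
  push_cast at h ⊢
  linear_combination (g : ℝ) * e * h

lemma natCast_mem_mulZInv (m n : ℕ) : (n : ℝ) ∈ mulZInv m 1 := ⟨n, 0, by simp⟩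

lemma mem_mulZInv_of_mem_ZInvM {m : ℕ} (hm : m ≠ 0) {x : ℝ} (hx : x ∈ ZInvM m) :
    x ∈ mulZInv m 1 := by
  have hm' : (m : ℝ) ≠ 0 := by exact_mod_cast hm
  obtain ⟨N, s, rfl⟩ := hx
  obtain ⟨n, rfl | rfl⟩ := s.eq_nat_or_neg
  · exact ⟨N * m ^ n, 0, by simp⟩
  · refine ⟨N, n, ?_⟩
    rw [zpow_neg, zpow_natCast]
    field_simp
    simp

lemma inv_pow_mul_mem {m g : ℕ} (hm : m ≠ 0) {x : ℝ} (n : ℕ) (hx : x ∈ mulZInv m g) :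
    ((m : ℝ) ^ n)⁻¹ * x ∈ mulZInv m g := by
  have hm' : (m : ℝ) ≠ 0 := by exact_mod_cast hm
  obtain ⟨N, t, h⟩ := hx
  refine ⟨N, t + n, ?_⟩
  rw [pow_add, ← h]
  field_simp

/-- Powers of `m` act trivially on `ℤ[1/m]` modulo `g ℤ[1/m]` when `g ∣ m - 1`. -/
lemma zpow_mul_sub_mem {m g : ℕ} (hm : 1 ≤ m) (hg : g ∣ m - 1) {x : ℝ} (s : ℤ)
    (hx : x ∈ mulZInv m 1) : (m : ℝ) ^ s * x - x ∈ mulZInv m g := by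
  have hm' : (m : ℝ) ≠ 0 := by positivity
  have key (n : ℕ) : (m : ℝ) ^ n * x - x ∈ mulZInv m g := by
    have hd : g ∣ m ^ n - 1 := hg.trans (by simpa using Nat.sub_dvd_pow_sub_pow m 1 n)
    have := mul_mem_mulZInv _ hd hx
    rw [Nat.cast_sub (Nat.one_le_pow _ _ hm)] at this
    push_cast at this
    convert this using 1
    ring
  obtain ⟨n, rfl | rfl⟩ := s.eq_nat_or_neg
  · simpa using key n
  · have := neg_mem (inv_pow_mul_mem (by omega) n (key n))
    convert this using 1
    rw [zpow_neg, zpow_natCast]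
    field_simp
    ring

lemma dvd_of_intCast_mem {m g : ℕ} (hc : IsCoprime (g : ℤ) m) {n : ℤ}
    (h : (n : ℝ) ∈ mulZInv m g) : (g : ℤ) ∣ n := by
  obtain ⟨N, t, h⟩ := h
  have h' : n * (m : ℤ) ^ t = g * N := by exact_mod_cast h
  exact (hc.pow_right (n := t)).dvd_of_dvd_mul_right ⟨N, h'⟩

lemma add_int_mul {r : ℝ} {F : ℝ → ℝ} (htr : ∀ x, F (x + r) = F x + r) (k : ℤ) (x : ℝ) :
    F (x + k * r) = F x + k * r := by
  have := AddConstMapClass.map_add_zsmul (⟨F, htr⟩ : AddConstMap ℝ ℝ r r) x k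
  rw [zsmul_eq_mul] at this
  exact this

lemma iterate_add_int_mul {r : ℝ} {F : ℝ → ℝ} (htr : ∀ x, F (x + r) = F x + r) (n : ℕ) (k : ℤ)
    (x : ℝ) : F^[n] (x + k * r) = F^[n] x + k * r :=
  Function.Commute.iterate_left (g := (· + k * r)) (fun y => add_int_mul htr k y) n x

lemma exists_eq_add_int_mul {r : ℝ} (hr : 0 < r) (x : ℝ) :
    ∃ y ∈ Set.Ico 0 r, ∃ k : ℤ, x = y + k * r := by
  refine ⟨toIcoMod hr 0 x, by simpa using toIcoMod_mem_Ico hr 0 x, toIcoDiv hr 0 x, ?_⟩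
  rw [← zsmul_eq_mul, toIcoMod_add_toIcoDiv_zsmul]

/-- The displacement `F x - x` of a lift is constant modulo `g ℤ[1/m]` on `ℤ[1/m]`. -/
lemma IsPLmLift.map_sub_mem {m g r : ℕ} (hr : 1 ≤ r) (hm : 1 ≤ m) (hg : g ∣ m - 1) {F : ℝ → ℝ}
    (hF : IsPLmLift m r r F) {x : ℝ} (hx : x ∈ mulZInv m 1) :
    F x - x - F 0 ∈ mulZInv m g := by
  obtain ⟨-, htr, n, a, ha, ha0, han, haZ, -, haff⟩ := hF
  have hr' : (0 : ℝ) < r := by exact_mod_cast hr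
  -- Induction along the subdivision, on the last breakpoint allowed to bound `x`.
  have key : ∀ j : Fin (n + 1), ∀ x ∈ mulZInv m 1, 0 ≤ x → x ≤ a j →
      F x - x - F 0 ∈ mulZInv m g := by
    intro j
    induction j using Fin.induction with
    | zero =>
      intro x _ h0 h1
      obtain rfl : x = 0 := le_antisymm (ha0 ▸ h1) h0
      simp
    | succ i ih =>
      intro x hx h0 h1
      rcases le_total x (a i.castSucc) with hle | hle
      · exact ih x hx h0 hle
      obtain ⟨s, β, hs⟩ := haff i
      have hai : a i.castSucc ∈ mulZInv m 1 := mem_mulZInv_of_mem_ZInvM (by omega) (haZ _)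
      have h0i : 0 ≤ a i.castSucc := ha0 ▸ ha.monotone (Fin.zero_le _)
      have e1 := hs x ⟨hle, h1⟩
      have e2 := hs _ ⟨le_rfl, ha.monotone i.castSucc_lt_succ.le⟩
      have := add_mem (zpow_mul_sub_mem hm hg s (sub_mem hx hai)) (ih _ hai h0i le_rfl)
      convert this using 1
      linear_combination e1 - e2
  -- Reduction to `0 ≤ x < r` by a translation.
  obtain ⟨y, hym, k, hyx⟩ := exists_eq_add_int_mul hr' x
  have hyA : y ∈ mulZInv m 1 := by
    have : y = x - k • (r : ℝ) := by simp [hyx]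
    rw [this]
    exact sub_mem hx (zsmul_mem (natCast_mem_mulZInv m r) _)
  have := key (Fin.last n) y hyA hym.1 (han ▸ hym.2.le)
  rw [hyx, add_int_mul htr]
  convert this using 1
  ring

lemma pow_apply_coe {r : ℝ} {f : Equiv.Perm (AddCircle r)} {F : ℝ → ℝ}
    (hf : ∀ x : ℝ, f ↑x = ↑(F x)) (n : ℕ) (x : ℝ) :
    (f ^ n) (x : AddCircle r) = ((F^[n] x : ℝ) : AddCircle r) := by
  induction n with
  | zero => simp
  | succ n ih => rw [pow_succ', Function.iterate_succ_apply', Equiv.Perm.mul_apply, ih, hf]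

/-- If `f ^ q = 1`, the `q`-th iterate of an increasing lift of `f` is the translation by one integer
multiple of the period, the same at every point; no continuity is needed. -/
lemma exists_iterate_eq_add {r : ℝ} (hr : 0 < r) {f : Equiv.Perm (AddCircle r)} {F : ℝ → ℝ}
    (hF : StrictMono F) (htr : ∀ x, F (x + r) = F x + r) (hf : ∀ x : ℝ, f ↑x = ↑(F x)) {q : ℕ}
    (hq : f ^ q = 1) : ∃ k : ℤ, ∀ x, F^[q] x = x + k * r := by
  have h1 (x : ℝ) : ∃ k : ℤ, F^[q] x = x + k * r := by
    have h := pow_apply_coe hf q x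
    rw [hq, Equiv.Perm.one_apply, eq_comm, ← sub_eq_zero, ← AddCircle.coe_sub,
      AddCircle.coe_eq_zero_iff] at h
    obtain ⟨k, hk⟩ := h
    exact ⟨k, by rw [zsmul_eq_mul] at hk; linarith⟩
  obtain ⟨k, hk⟩ := h1 0
  refine ⟨k, fun x => ?_⟩
  obtain ⟨y, hym, l, hyx⟩ := exists_eq_add_int_mul hr x
  obtain ⟨j, hj⟩ := h1 y
  -- `F^[q] y` lies in `[k r, k r + r)` since `y` lies in `[0, r)`; this pins down `j`.
  have hlo := (hF.iterate q).monotone hym.1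
  have hhi := hF.iterate q hym.2
  have hr1 : F^[q] r = F^[q] 0 + r := by simpa using iterate_add_int_mul htr q 1 0
  have h2 : ((k - 1 : ℤ) : ℝ) < j := by
    refine lt_of_mul_lt_mul_right (a := r) ?_ hr.le
    push_cast
    linarith [hym.2]
  have h3 : (j : ℝ) < ((k + 1 : ℤ) : ℝ) := by
    refine lt_of_mul_lt_mul_right (a := r) ?_ hr.le
    push_cast
    linarith [hym.1]
  have h4 : j = k := by
    have := Int.cast_lt.1 h2
    have := Int.cast_lt.1 h3
    omega
  rw [hyx, iterate_add_int_mul htr, hj, h4]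
  ring

/-- The rotation number `k / q` of an element of order exactly `q` is in lowest terms. -/
lemma isCoprime_of_iterate_eq_add {r : ℝ} {f : Equiv.Perm (AddCircle r)} {F : ℝ → ℝ}
    (hF : StrictMono F) (htr : ∀ x, F (x + r) = F x + r) (hf : ∀ x : ℝ, f ↑x = ↑(F x)) {k : ℤ}
    (hq : 0 < orderOf f) (hk : ∀ x, F^[orderOf f] x = x + k * r) :
    IsCoprime k (orderOf f) := by
  rw [Int.isCoprime_iff_gcd_eq_one]
  set d := Int.gcd k (orderOf f) with hd
  have hd0 : 0 < d := Int.gcd_pos_of_ne_zero_right _ (by omega)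
  obtain ⟨k', hk'⟩ : (d : ℤ) ∣ k := Int.gcd_dvd_left _ _
  obtain ⟨n, hn⟩ : d ∣ orderOf f := by exact_mod_cast Int.gcd_dvd_right k (orderOf f)
  have hn0 : 0 < n := Nat.pos_of_ne_zero (by rintro rfl; omega)
  have hpow : f ^ n = 1 := by
    ext x
    induction x using QuotientAddGroup.induction_on with
    | H x =>
    have hc : Function.Commute F^[n] (· + (k' * r)) := fun y => iterate_add_int_mul htr n k' y
    have hx : F^[n] x = x + k' * r := by
      refine (hc.iterate_pos_eq_iff_map_eq (hF.iterate n).monotone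
        (fun a b h => by simpa using h) hd0).1 ?_
      rw [← Function.iterate_mul, mul_comm n d, ← hn, hk, add_right_iterate_apply, hk']
      push_cast
      rw [nsmul_eq_mul]
      ring
    have := pow_apply_coe hf n x
    rw [hx] at this
    refine this.trans ?_
    rw [Equiv.Perm.one_apply, ← sub_eq_zero]
    change ((x + k' * r : ℝ) : AddCircle r) - ((x : ℝ) : AddCircle r) = 0
    rw [← AddCircle.coe_sub, AddCircle.coe_eq_zero_iff]
    exact ⟨k', by rw [zsmul_eq_mul]; ring⟩
  have hle := Nat.le_of_dvd hn0 (orderOf_dvd_of_pow_eq_one hpow)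
  rw [hn] at hle
  nlinarith

/-- If `gcd(m-1, q)` does not divide `r`, then the Brown–Thompson group `T_{r,m}`
contains no element of order `q`. -/
theorem no_conjugacy_class_of_order_q (r m q : ℕ) (hr : 1 ≤ r) (hm : 2 ≤ m) (hq : 2 ≤ q)
    (h : ¬ Nat.gcd (m - 1) q ∣ r) :
    ∀ f : Equiv.Perm (AddCircle (r : ℝ)), InT r m f → orderOf f ≠ q := by
  rintro f ⟨F, hPL, hf⟩ rfl
  apply h
  have hr' : (0 : ℝ) < r := by exact_mod_cast hr
  obtain ⟨k, hk⟩ := exists_iterate_eq_add hr' hPL.1 hPL.2.1 hf (pow_orderOf_eq_one f)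
  have hkq := isCoprime_of_iterate_eq_add hPL.1 hPL.2.1 hf (by omega) hk
  set g := Nat.gcd (m - 1) (orderOf f) with hg
  have hgm : g ∣ m - 1 := Nat.gcd_dvd_left _ _
  have hgq : g ∣ orderOf f := Nat.gcd_dvd_right _ _
  have hF0 : F 0 ∈ mulZInv m 1 := by
    obtain ⟨-, -, n, a, -, ha0, -, -, hFa, -⟩ := hPL
    exact mem_mulZInv_of_mem_ZInvM (by omega) (ha0 ▸ hFa 0)
  have hit (n : ℕ) : F^[n] 0 - n * F 0 ∈ mulZInv m g := by
    induction n with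
    | zero => simp
    | succ n ih =>
      have hA : F^[n] 0 ∈ mulZInv m 1 := by
        have := add_mem (mulZInv_le m g ih) (nsmul_mem hF0 n)
        simpa using this
      have := add_mem (hPL.map_sub_mem hr (by omega) hgm hA) ih
      rw [Function.iterate_succ_apply']
      convert this using 1
      push_cast
      ring
  have hkr : ((k * r : ℤ) : ℝ) ∈ mulZInv m g := by
    have := add_mem (hit (orderOf f)) (mul_mem_mulZInv _ hgq hF0)
    rw [hk] at this
    simpa using this
  have hcop : IsCoprime (g : ℤ) m := by
    rw [Nat.isCoprime_iff_coprime]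
    refine Nat.Coprime.coprime_dvd_left hgm ?_
    exact Nat.coprime_self_sub_left (by omega) |>.2 (by simp)
  have hdvd := dvd_of_intCast_mem hcop hkr
  have hgk : IsCoprime (g : ℤ) k :=
    (hkq.of_isCoprime_of_dvd_right (by exact_mod_cast hgq)).symm
  exact_mod_cast hgk.dvd_of_dvd_mul_left hdvd
end

section
/- Let m ≥ 2 be an integer. Two m-intervals I and I' are PL_m-equivalent if and only if |I| − |I'| ∈ (m−1)·ℤ[1/m], where |I| denotes the length of the interval I. -/
/-!
If `F` is affine with slope `m ^ s` on a piece of length `l ∈ ℤ[1/m]`, the piece and its image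
differ in length by `l * (1 - m ^ s)`, which lies in `(m - 1)·ℤ[1/m]`; summing over the pieces
shows that the condition is necessary (`forward_direction`).

Conversely, over a common denominator the lengths are `N * m ^ (-q)` and `N' * m ^ (-q)` with
positive integers `N ≡ N' [ZMOD m - 1]`. Cutting an interval of length `m ^ s` into `m` equal parts
increases the number of pieces by `m - 1`, so iterating on one of the parts shows that an interval
of length `m ^ s` is equivalent to one of length `m ^ t * (1 + k * (m - 1))`, in either direction
(`expand`, `contract`). This absorbs the difference `N - N'`, and what remains of the two intervals
has equal length and is matched by a translation. Maps are assembled by adjoining affine pieces on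
the right (`PLmEquivIntervals.snoc`).
-/

open Filter Topology

/-- There is a `PL_m` homeomorphism from the interval `[a, b]` onto the interval
`[c, d]`: a piecewise affine homeomorphism with slopes in `⟨m⟩ = {m^s : s ∈ ℤ}` and
breakpoints in `ℤ[1/m]`. -/
def PLmEquivIntervals (m : ℕ) (a b c d : ℝ) : Prop :=
  ∃ F : ℝ → ℝ, StrictMonoOn F (Set.Icc a b) ∧ F a = c ∧ F b = d ∧
    ∃ (n : ℕ) (pts : Fin (n + 1) → ℝ),
      StrictMono pts ∧ pts 0 = a ∧ pts (Fin.last n) = b ∧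
      (∀ i, pts i ∈ ZInvM m) ∧
      ∀ i : Fin n, ∃ (s : ℤ) (β : ℝ),
        ∀ x ∈ Set.Icc (pts i.castSucc) (pts i.succ), F x = (m : ℝ) ^ s * x + β

/-! ### The ring `ℤ[1/m]` -/

section RingOperations

variable {m : ℕ}

/-- Elements of `ℤ[1/m]` can be written with any sufficiently large denominator `m ^ q`; this
allows finitely many of them to be brought to a common denominator. -/
lemma ZInvM.exists_denom (hm : 2 ≤ m) {x : ℝ} (hx : x ∈ ZInvM m) :
    ∃ p : ℕ, ∀ q : ℕ, p ≤ q → ∃ N : ℤ, x = (N : ℝ) * (m : ℝ) ^ (-(q : ℤ)) := by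
  obtain ⟨N, s, rfl⟩ := hx
  have hm0 : (m : ℝ) ≠ 0 := by positivity
  refine ⟨(-s).toNat, fun q hq => ⟨N * (m : ℤ) ^ (s + q).toNat, ?_⟩⟩
  have h : ((s + q).toNat : ℤ) = s + q := by omega
  push_cast
  rw [← zpow_natCast (m : ℝ), h, mul_assoc, ← zpow_add₀ hm0]
  congr 2
  ring

lemma ZInvM.add (hm : 2 ≤ m) {x y : ℝ} (hx : x ∈ ZInvM m) (hy : y ∈ ZInvM m) :
    x + y ∈ ZInvM m := by
  obtain ⟨p, hp⟩ := ZInvM.exists_denom hm hx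
  obtain ⟨r, hr⟩ := ZInvM.exists_denom hm hy
  obtain ⟨N, hN⟩ := hp (max p r) (le_max_left _ _)
  obtain ⟨K, hK⟩ := hr (max p r) (le_max_right _ _)
  refine ⟨N + K, -((max p r : ℕ) : ℤ), ?_⟩
  rw [hN, hK, Int.cast_add, add_mul]

lemma ZInvM.mul (hm : 2 ≤ m) {x y : ℝ} (hx : x ∈ ZInvM m) (hy : y ∈ ZInvM m) :
    x * y ∈ ZInvM m := by
  obtain ⟨N, s, rfl⟩ := hx
  obtain ⟨K, t, rfl⟩ := hy
  have hm0 : (m : ℝ) ≠ 0 := by positivity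
  refine ⟨N * K, s + t, ?_⟩
  rw [zpow_add₀ hm0]
  push_cast
  ring

lemma ZInvM.neg {x : ℝ} (hx : x ∈ ZInvM m) : -x ∈ ZInvM m := by
  obtain ⟨N, s, rfl⟩ := hx
  exact ⟨-N, s, by push_cast; ring⟩

lemma ZInvM.sub (hm : 2 ≤ m) {x y : ℝ} (hx : x ∈ ZInvM m) (hy : y ∈ ZInvM m) :
    x - y ∈ ZInvM m := by
  rw [sub_eq_add_neg]
  exact ZInvM.add hm hx (ZInvM.neg hy)

lemma ZInvM.intCast (N : ℤ) : (N : ℝ) ∈ ZInvM m := ⟨N, 0, by simp⟩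

lemma ZInvM.zpow (s : ℤ) : (m : ℝ) ^ s ∈ ZInvM m := ⟨1, s, by simp⟩

lemma exists_one_sub_zpow (hm : 2 ≤ m) (s : ℤ) :
    ∃ w ∈ ZInvM m, 1 - (m : ℝ) ^ s = ((m : ℝ) - 1) * w := by
  have hm0 : (m : ℝ) ≠ 0 := by positivity
  have key : ∀ n : ℕ, ∃ K : ℤ, (m : ℝ) ^ n - 1 = ((m : ℝ) - 1) * K := by
    intro n
    obtain ⟨K, hK⟩ := sub_dvd_pow_sub_pow (m : ℤ) 1 n
    rw [one_pow] at hK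
    exact ⟨K, by exact_mod_cast hK⟩
  obtain ⟨n, rfl | rfl⟩ := s.eq_nat_or_neg
  · obtain ⟨K, hK⟩ := key n
    refine ⟨-(K : ℝ), ZInvM.neg (ZInvM.intCast K), ?_⟩
    rw [zpow_natCast]
    linear_combination -hK
  · obtain ⟨K, hK⟩ := key n
    refine ⟨(K : ℝ) * (m : ℝ) ^ (-(n : ℤ)), ⟨K, _, rfl⟩, ?_⟩
    have h : (m : ℝ) ^ n * (m : ℝ) ^ (-(n : ℤ)) = 1 := by
      rw [← zpow_natCast, ← zpow_add₀ hm0]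
      simp
    linear_combination (m : ℝ) ^ (-(n : ℤ)) * hK - h

end RingOperations

/-! ### Building equivalences piece by piece -/

section Construction

variable {m : ℕ}

/-- The degenerate equivalence between two points, with no affine pieces: the starting point for
`PLmEquivIntervals.snoc`. -/
lemma PLmEquivIntervals.point {a : ℝ} (ha : a ∈ ZInvM m) (c : ℝ) :
    PLmEquivIntervals m a a c c := by
  refine ⟨fun _ => c, ?_, rfl, rfl, 0, fun _ => a, fun i j h => by
    have := Fin.lt_def.mp h; omega, rfl, rfl,
    fun _ => ha, fun i => i.elim0⟩
  intro x hx y hy hxy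
  exact absurd (hx.1.trans_lt hxy) (not_lt.mpr hy.2)

/-- An equivalence extends to the right by one (possibly degenerate) affine piece. -/
lemma PLmEquivIntervals.snoc (hm : 2 ≤ m) {a b c d e f : ℝ}
    (h : PLmEquivIntervals m a b c d) (he : e ∈ ZInvM m) (hbe : b ≤ e) (s : ℤ)
    (hf : f = d + (m : ℝ) ^ s * (e - b)) : PLmEquivIntervals m a e c f := by
  rcases hbe.eq_or_lt with rfl | hbe
  · have hfd : f = d := by rw [hf]; ring
    rwa [hfd]
  obtain ⟨F, hF, hFa, hFb, n, pts, hpts, h0, hl, hZ, haff⟩ := h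
  have hms : (0 : ℝ) < (m : ℝ) ^ s := by positivity
  have hab : a ≤ b := by
    rw [← h0, ← hl]
    exact hpts.monotone (Fin.zero_le _)
  refine ⟨fun x => if x ≤ b then F x else d + (m : ℝ) ^ s * (x - b), ?_, ?_, ?_, n + 1,
    Fin.snoc (α := fun _ => ℝ) pts e, ?_, ?_, ?_, ?_, ?_⟩
  · intro x hx y hy hxy
    dsimp only
    by_cases hyb : y ≤ b
    · rw [if_pos (hxy.le.trans hyb), if_pos hyb]
      exact hF ⟨hx.1, hxy.le.trans hyb⟩ ⟨hy.1, hyb⟩ hxy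
    · rw [if_neg hyb]
      by_cases hxb : x ≤ b
      · rw [if_pos hxb]
        have h1 : F x ≤ d := by
          rw [← hFb]
          exact hF.monotoneOn ⟨hx.1, hxb⟩ ⟨hab, le_rfl⟩ hxb
        have h2 : 0 < (m : ℝ) ^ s * (y - b) := mul_pos hms (by linarith)
        linarith
      · rw [if_neg hxb]
        have h2 : 0 < (m : ℝ) ^ s * (y - x) := mul_pos hms (by linarith)
        linarith
  · simp [hab, hFa]
  · simp [not_le.mpr hbe, hf]
  · rw [Fin.strictMono_iff_lt_succ]
    intro i
    induction i using Fin.lastCases with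
    | last => rw [Fin.succ_last, Fin.snoc_castSucc, Fin.snoc_last, hl]; exact hbe
    | cast j =>
      rw [Fin.succ_castSucc, Fin.snoc_castSucc, Fin.snoc_castSucc]
      exact hpts (Fin.castSucc_lt_succ)
  · rw [← Fin.castSucc_zero, Fin.snoc_castSucc, h0]
  · rw [Fin.snoc_last]
  · intro i
    induction i using Fin.lastCases with
    | last => rw [Fin.snoc_last]; exact he
    | cast j => rw [Fin.snoc_castSucc]; exact hZ j
  · intro i
    induction i using Fin.lastCases with
    | last =>
      refine ⟨s, d - (m : ℝ) ^ s * b, fun x hx => ?_⟩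
      rw [Fin.succ_last, Fin.snoc_castSucc, Fin.snoc_last, hl] at hx
      dsimp only
      by_cases hxb : x ≤ b
      · have hx' : x = b := le_antisymm hxb hx.1
        rw [if_pos hxb, hx', hFb]
        ring
      · rw [if_neg hxb]
        ring
    | cast j =>
      obtain ⟨t, β, hβ⟩ := haff j
      refine ⟨t, β, fun x hx => ?_⟩
      rw [Fin.succ_castSucc, Fin.snoc_castSucc, Fin.snoc_castSucc] at hx
      have hjb : pts j.succ ≤ b := by
        rw [← hl]
        exact hpts.monotone (Fin.le_last _)
      dsimp only
      rw [if_pos (hx.2.trans hjb)]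
      exact hβ x hx

/-- An interval of length `m ^ s` is equivalent to one of length `m ^ t * (1 + k * (m - 1))`.
In the inductive step the source is cut into parts of lengths `m ^ (s - 1)` and
`(m - 1) * m ^ (s - 1)`; the second maps affinely onto an interval of length `(m - 1) * m ^ t`. -/
lemma expand (hm : 2 ≤ m) (t : ℤ) {a : ℝ} (c : ℝ) (ha : a ∈ ZInvM m) (k : ℕ) (s : ℤ) :
    PLmEquivIntervals m a (a + (m : ℝ) ^ s) c
      (c + (m : ℝ) ^ t * (1 + k * ((m : ℝ) - 1))) := by
  have hm0 : (m : ℝ) ≠ 0 := by positivity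
  have hm1 : (1 : ℝ) ≤ m := by exact_mod_cast (by omega : 1 ≤ m)
  have hmem : ∀ s : ℤ, a + (m : ℝ) ^ s ∈ ZInvM m := fun s => ZInvM.add hm ha (ZInvM.zpow s)
  induction k generalizing s with
  | zero =>
    refine (PLmEquivIntervals.point ha c).snoc hm (hmem s) ?_ (t - s) ?_
    · have : (0 : ℝ) < (m : ℝ) ^ s := by positivity
      linarith
    · have h : (m : ℝ) ^ t = (m : ℝ) ^ (t - s) * (m : ℝ) ^ s := by
        rw [← zpow_add₀ hm0]; congr 1; ring
      rw [h]; push_cast; ring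
  | succ k ih =>
    refine (ih (s - 1)).snoc hm (hmem s) ?_ (t - s + 1) ?_
    · gcongr
      · omega
    · have h1 : (m : ℝ) ^ s = m * (m : ℝ) ^ (s - 1) := by
        rw [← zpow_one_add₀ hm0]; congr 1; ring
      have h : (m : ℝ) ^ t = (m : ℝ) ^ (t - s + 1) * (m : ℝ) ^ (s - 1) := by
        rw [← zpow_add₀ hm0]; congr 1; ring
      rw [h1, h]; push_cast; ring

/-- The counterpart of `expand` with source and target exchanged; here it is the target that is
subdivided. Proving it directly avoids constructing inverse maps. -/
lemma contract (hm : 2 ≤ m) (t : ℤ) {a : ℝ} (c : ℝ) (ha : a ∈ ZInvM m) (k : ℕ) (s : ℤ) :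
    PLmEquivIntervals m a (a + (m : ℝ) ^ t * (1 + k * ((m : ℝ) - 1))) c
      (c + (m : ℝ) ^ s) := by
  have hm0 : (m : ℝ) ≠ 0 := by positivity
  have hm1 : (1 : ℝ) ≤ m := by exact_mod_cast (by omega : 1 ≤ m)
  have ht : (0 : ℝ) < (m : ℝ) ^ t := by positivity
  have hmem : ∀ k : ℕ, a + (m : ℝ) ^ t * (1 + k * ((m : ℝ) - 1)) ∈ ZInvM m := by
    intro k
    exact ZInvM.add hm ha ⟨1 + k * (m - 1), t, by push_cast; ring⟩
  induction k generalizing s with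
  | zero =>
    refine (PLmEquivIntervals.point ha c).snoc hm (hmem 0) ?_ (s - t) ?_
    · push_cast; linarith
    · have h : (m : ℝ) ^ s = (m : ℝ) ^ (s - t) * (m : ℝ) ^ t := by
        rw [← zpow_add₀ hm0]; congr 1; ring
      rw [h]; push_cast; ring
  | succ k ih =>
    refine (ih (s - 1)).snoc hm (hmem (k + 1)) ?_ (s - 1 - t) ?_
    · have h2 : 0 ≤ (m : ℝ) ^ t * ((m : ℝ) - 1) := mul_nonneg ht.le (by linarith)
      push_cast
      linarith
    · have h1 : (m : ℝ) ^ s = m * (m : ℝ) ^ (s - 1) := by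
        rw [← zpow_one_add₀ hm0]; congr 1; ring
      have h : (m : ℝ) ^ (s - 1) = (m : ℝ) ^ (s - 1 - t) * (m : ℝ) ^ t := by
        rw [← zpow_add₀ hm0]; congr 1; ring
      rw [h1, h]; push_cast; ring

end Construction

/-! ### The criterion -/

/-- The difference of the lengths of `[pts 0, pts i]` and its image is accumulated piece by piece
over the subdivision. -/
lemma forward_direction {m : ℕ} (hm : 2 ≤ m) {a b c d : ℝ} (h : PLmEquivIntervals m a b c d) :
    ∃ z ∈ ZInvM m, (b - a) - (d - c) = ((m : ℝ) - 1) * z := by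
  obtain ⟨F, -, rfl, rfl, n, pts, hpts, rfl, rfl, hZ, haff⟩ := h
  suffices H : ∀ i : Fin (n + 1), ∃ z ∈ ZInvM m,
      (pts i - pts 0) - (F (pts i) - F (pts 0)) = ((m : ℝ) - 1) * z from H _
  intro i
  induction i using Fin.induction with
  | zero => exact ⟨0, ⟨0, 0, by simp⟩, by ring⟩
  | succ i ih =>
    obtain ⟨z, hz, hzeq⟩ := ih
    obtain ⟨s, β, hβ⟩ := haff i
    obtain ⟨w, hw, hweq⟩ := exists_one_sub_zpow hm s
    have hle : pts i.castSucc ≤ pts i.succ := (hpts Fin.castSucc_lt_succ).le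
    have h1 := hβ _ ⟨le_rfl, hle⟩
    have h2 := hβ _ ⟨hle, le_rfl⟩
    refine ⟨z + (pts i.succ - pts i.castSucc) * w,
      ZInvM.add hm hz (ZInvM.mul hm (ZInvM.sub hm (hZ _) (hZ _)) hw), ?_⟩
    linear_combination hzeq + h1 - h2 + (pts i.succ - pts i.castSucc) * hweq

/-- Bieri–Strebel criterion: two `m`-intervals `[a,b]` and `[c,d]` are `PL_m`-equivalent
if and only if the difference of their lengths lies in `(m-1)·ℤ[1/m]`. -/
theorem bieri_strebel_criterion (m : ℕ) (hm : 2 ≤ m) (a b c d : ℝ)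
    (ha : a ∈ ZInvM m) (hb : b ∈ ZInvM m) (hc : c ∈ ZInvM m) (hd : d ∈ ZInvM m)
    (hab : a < b) (hcd : c < d) :
    PLmEquivIntervals m a b c d ↔
      ∃ z ∈ ZInvM m, (b - a) - (d - c) = ((m : ℝ) - 1) * z := by
  constructor
  · exact forward_direction hm
  · rintro ⟨z, hz, hzeq⟩
    have hm0 : (0 : ℝ) < m := by positivity
    obtain ⟨p₁, h₁⟩ := ZInvM.exists_denom hm (ZInvM.sub hm hb ha)
    obtain ⟨p₂, h₂⟩ := ZInvM.exists_denom hm (ZInvM.sub hm hd hc)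
    obtain ⟨p₃, h₃⟩ := ZInvM.exists_denom hm hz
    obtain ⟨q, hq₁, hq₂, hq₃⟩ : ∃ q, p₁ ≤ q ∧ p₂ ≤ q ∧ p₃ ≤ q :=
      ⟨p₁ + p₂ + p₃, by omega, by omega, by omega⟩
    obtain ⟨N, hN⟩ := h₁ q hq₁
    obtain ⟨N', hN'⟩ := h₂ q hq₂
    obtain ⟨K, hK⟩ := h₃ q hq₃
    set u : ℝ := (m : ℝ) ^ (-(q : ℤ)) with hu
    have hu0 : 0 < u := by positivity
    have hNpos : 1 ≤ N := by
      have h : (0 : ℝ) < N := pos_of_mul_pos_left (by linarith : 0 < (N : ℝ) * u) hu0.le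
      exact_mod_cast h
    have hNpos' : 1 ≤ N' := by
      have h : (0 : ℝ) < N' := pos_of_mul_pos_left (by linarith : 0 < (N' : ℝ) * u) hu0.le
      exact_mod_cast h
    have hNr : (1 : ℝ) ≤ N := by exact_mod_cast hNpos
    have hNr' : (1 : ℝ) ≤ N' := by exact_mod_cast hNpos'
    have hdiff : (N : ℝ) - N' = ((m : ℝ) - 1) * K := by
      apply mul_right_cancel₀ hu0.ne'
      rw [hN, hN', hK] at hzeq
      linear_combination hzeq
    -- The sign of `K` decides which of the two intervals has fewer pieces of length `u`.
    -- In each case one unit piece absorbs the surplus `|K| * (m - 1)` and a translation does the rest.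
    rcases le_total K 0 with hK0 | hK0
    · obtain ⟨k, hk⟩ := Int.eq_ofNat_of_zero_le (neg_nonneg.mpr hK0)
      have hkr : (K : ℝ) = -k := by
        have : K = -(k : ℤ) := by omega
        rw [this]; push_cast; ring
      rw [hkr] at hdiff
      refine (expand hm (-(q : ℤ)) c ha k (-(q : ℤ))).snoc hm hb ?_ 0 ?_
      · rw [← hu]
        have : 1 * u ≤ N * u := mul_le_mul_of_nonneg_right hNr hu0.le
        linarith
      · rw [← hu, zpow_zero]
        linear_combination hN' - hN - u * hdiff
    · obtain ⟨k, rfl⟩ := Int.eq_ofNat_of_zero_le hK0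
      rw [Int.cast_natCast] at hdiff
      refine (contract hm (-(q : ℤ)) c ha k (-(q : ℤ))).snoc hm hb ?_ 0 ?_
      · rw [← hu]
        have h : (1 + (k : ℝ) * ((m : ℝ) - 1)) * u ≤ N * u :=
          mul_le_mul_of_nonneg_right (by linarith) hu0.le
        linarith
      · rw [← hu, zpow_zero]
        linear_combination hN' - hN - u * hdiff
end

section
/- Let m ≥ 2 be an integer. If r and r' are two positive integers that are congruent modulo m−1, then the groups T_{r,m} and T_{r',m} are isomorphic. Consequently every group T_{r',m} is isomorphic to one of the m−1 groups T_{r,m} with r ∈ {1, ..., m−1}. -/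
/-!
The isomorphism is conjugation by a `PL_m` homeomorphism of circles. It suffices to treat
`r' = r + (m - 1)`. Let `φ t = min (m t) (t + (m - 1))`: it has slope `m` on `[0, 1]` and slope `1`
on `[1, r]`, so it maps `[0, r]` onto `[0, r + (m - 1)]`. Its inverse is
`ψ u = max (u / m) (u - (m - 1))`. The equivariant extensions of `φ` and `ψ` to `ℝ` are mutually
inverse lifts, and they induce a bijection `S_r ≃ S_{r'}`.

Conjugation by this bijection maps the generating set of `T_{r,m}` onto that of `T_{r',m}`
(`TGroup_mulEquiv`), because `PL_m` lifts are closed under composition (`NiceLift.comp`). For this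
closure, the subdivision of `[0, r]` is replaced by a locally finite set `A ⊆ ℤ[1/m]` of breakpoints
on all of `ℝ`, and the condition on images of breakpoints by `F x ∈ ℤ[1/m] ↔ x ∈ ℤ[1/m]`
(`NiceLift`, with the comparison in `niceLift_of_finset`, `IsPLmLift.niceLift` and
`NiceLift.isPLmLift`). Then `A_F ∪ F⁻¹(A_G)` is a set of breakpoints for `G ∘ F`.
-/

open Filter Topology

/-- The Brown–Thompson group `T_{r,m}` as a subgroup of the permutations of `ℝ/rℤ`.
(The set of `PL_m` homeomorphisms is closed under composition and inverses, so it
coincides with the subgroup it generates.) -/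
def TGroup (r m : ℕ) : Subgroup (Equiv.Perm (AddCircle (r : ℝ))) :=
  Subgroup.closure {f | InT r m f}

/-! ### The ring `ℤ[1/m]` -/

lemma mem_ZInvM_iff {m : ℕ} (hm : 2 ≤ m) (x : ℝ) :
    x ∈ ZInvM m ↔ ∃ (N : ℤ) (k : ℕ), x * (m : ℝ) ^ k = N := by
  have hm0 : (m : ℝ) ≠ 0 := by positivity
  constructor
  · rintro ⟨N, s, rfl⟩
    obtain ⟨n, rfl | rfl⟩ := s.eq_nat_or_neg
    · exact ⟨N * (m : ℤ) ^ n, 0, by push_cast; simp⟩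
    · exact ⟨N, n, by rw [zpow_neg, zpow_natCast]; field_simp⟩
  · rintro ⟨N, k, h⟩
    exact ⟨N, -k, by rw [← h, zpow_neg, zpow_natCast]; field_simp⟩

lemma ZInvM_int {m : ℕ} (N : ℤ) : (N : ℝ) ∈ ZInvM m := ⟨N, 0, by simp⟩

lemma ZInvM_nat {m : ℕ} (N : ℕ) : (N : ℝ) ∈ ZInvM m := ⟨N, 0, by simp⟩

lemma ZInvM_add {m : ℕ} (hm : 2 ≤ m) {x y : ℝ} (hx : x ∈ ZInvM m) (hy : y ∈ ZInvM m) :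
    x + y ∈ ZInvM m := by
  rw [mem_ZInvM_iff hm] at *
  obtain ⟨N, k, h⟩ := hx
  obtain ⟨M, l, h'⟩ := hy
  refine ⟨N * (m : ℤ) ^ l + M * (m : ℤ) ^ k, k + l, ?_⟩
  push_cast
  rw [← h, ← h']
  ring

lemma ZInvM_neg {m : ℕ} {x : ℝ} (hx : x ∈ ZInvM m) : -x ∈ ZInvM m := by
  obtain ⟨N, s, rfl⟩ := hx
  exact ⟨-N, s, by push_cast; ring⟩

lemma ZInvM_sub {m : ℕ} (hm : 2 ≤ m) {x y : ℝ} (hx : x ∈ ZInvM m) (hy : y ∈ ZInvM m) :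
    x - y ∈ ZInvM m := by
  rw [sub_eq_add_neg]
  exact ZInvM_add hm hx (ZInvM_neg hy)

lemma ZInvM_zpow_mul {m : ℕ} (hm : 2 ≤ m) (t : ℤ) {x : ℝ} (hx : x ∈ ZInvM m) :
    (m : ℝ) ^ t * x ∈ ZInvM m := by
  have hm0 : (m : ℝ) ≠ 0 := by positivity
  obtain ⟨N, s, rfl⟩ := hx
  exact ⟨N, s + t, by rw [zpow_add₀ hm0]; ring⟩

lemma ZInvM_add_iff {m : ℕ} (hm : 2 ≤ m) {x y : ℝ} (hy : y ∈ ZInvM m) :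
    x + y ∈ ZInvM m ↔ x ∈ ZInvM m :=
  ⟨fun h => by simpa using ZInvM_sub hm h hy, fun h => ZInvM_add hm h hy⟩

/-! ### Lifts with a locally finite set of breakpoints -/

/-- `F` is affine on `[x, y]`, with slope a power of `m`. -/
def AffOn (m : ℕ) (F : ℝ → ℝ) (x y : ℝ) : Prop :=
  ∃ (s : ℤ) (β : ℝ), ∀ z ∈ Set.Icc x y, F z = (m : ℝ) ^ s * z + β

lemma AffOn.mem_iff {m : ℕ} (hm : 2 ≤ m) {F : ℝ → ℝ} {x y : ℝ} (h : AffOn m F x y) (hxy : x ≤ y)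
    (hx : x ∈ ZInvM m) (hFx : F x ∈ ZInvM m) : F y ∈ ZInvM m ↔ y ∈ ZInvM m := by
  have hm0 : (m : ℝ) ≠ 0 := by positivity
  obtain ⟨s, β, h⟩ := h
  have h1 := h x ⟨le_rfl, hxy⟩
  have h2 := h y ⟨hxy, le_rfl⟩
  have e1 : F y = (m : ℝ) ^ s * (y - x) + F x := by rw [h1, h2]; ring
  have e2 : y = (m : ℝ) ^ (-s) * (F y - F x) + x := by
    rw [e1, zpow_neg]
    field_simp
    ring
  constructor
  · intro hy
    rw [e2]
    exact ZInvM_add hm (ZInvM_zpow_mul hm _ (ZInvM_sub hm hy hFx)) hx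
  · intro hy
    rw [e1]
    exact ZInvM_add hm (ZInvM_zpow_mul hm _ (ZInvM_sub hm hy hx)) hFx

/-- A reformulation of `IsPLmLift` which is local on `ℝ`: the breakpoints form a locally finite
subset `A` of `ℤ[1/m]`, and `F` preserves `ℤ[1/m]` in both directions. -/
structure NiceLift (m : ℕ) (r r' : ℝ) (F : ℝ → ℝ) : Prop where
  mono : StrictMono F
  equi : ∀ x : ℝ, F (x + r) = F x + r'
  mem_iff : ∀ x, F x ∈ ZInvM m ↔ x ∈ ZInvM m
  pl : ∃ A : Set ℝ, A ⊆ ZInvM m ∧ (∀ a b, (A ∩ Set.Icc a b).Finite) ∧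
    ∀ x y, x < y → (∀ z ∈ Set.Ioo x y, z ∉ A) → AffOn m F x y

lemma NiceLift.comp {m : ℕ} (hm : 2 ≤ m) {r r' r'' : ℝ} {F G : ℝ → ℝ} (hG : NiceLift m r' r'' G)
    (hF : NiceLift m r r' F) : NiceLift m r r'' (G ∘ F) := by
  have hm0 : (0 : ℝ) < m := by positivity
  refine ⟨hG.mono.comp hF.mono, fun x => by simp [hF.equi, hG.equi],
    fun x => (hG.mem_iff _).trans (hF.mem_iff x), ?_⟩
  obtain ⟨A, hA, hAf, hAa⟩ := hF.pl
  obtain ⟨B, hB, hBf, hBa⟩ := hG.pl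
  refine ⟨A ∪ F ⁻¹' B, ?_, ?_, ?_⟩
  · rintro x (hx | hx)
    · exact hA hx
    · exact (hF.mem_iff x).1 (hB hx)
  · intro a b
    rw [Set.union_inter_distrib_right]
    refine (hAf a b).union (Set.Finite.of_finite_image (f := F) ((hBf (F a) (F b)).subset ?_)
      hF.mono.injective.injOn)
    rintro _ ⟨x, ⟨hx, hxa, hxb⟩, rfl⟩
    exact ⟨hx, hF.mono.monotone hxa, hF.mono.monotone hxb⟩
  · intro x y hxy h
    obtain ⟨s, β, hs⟩ := hAa x y hxy fun z hz hzA => h z hz (Or.inl hzA)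
    have hsp : (0 : ℝ) < (m : ℝ) ^ s := zpow_pos hm0 s
    have hx := hs x ⟨le_rfl, hxy.le⟩
    have hy := hs y ⟨hxy.le, le_rfl⟩
    obtain ⟨t, γ, ht⟩ := hBa (F x) (F y) (hF.mono hxy) fun z hz hzB => by
      -- A breakpoint `z` of `G` between `F x` and `F y` is a value of `F`, affine on `[x, y]`.
      have hz1 : x < (z - β) / (m : ℝ) ^ s := by
        rw [lt_div_iff₀ hsp]; linarith [hz.1]
      have hz2 : (z - β) / (m : ℝ) ^ s < y := by
        rw [div_lt_iff₀ hsp]; linarith [hz.2]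
      refine h _ ⟨hz1, hz2⟩ (Or.inr ?_)
      rw [Set.mem_preimage, hs _ ⟨hz1.le, hz2.le⟩]
      convert hzB using 1
      field_simp
      ring
    refine ⟨t + s, (m : ℝ) ^ t * β + γ, fun z hz => ?_⟩
    rw [Function.comp_apply, ht _ ⟨hF.mono.monotone hz.1, hF.mono.monotone hz.2⟩, hs z hz,
      zpow_add₀ hm0.ne']
    ring

lemma equi_int {r r' : ℝ} {F : ℝ → ℝ} (h : ∀ x : ℝ, F (x + r) = F x + r') (k : ℤ) (x : ℝ) :
    F (x + k * r) = F x + k * r' := by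
  induction k using Int.induction_on generalizing x with
  | zero => simp
  | succ i ih =>
    have := h (x + i * r)
    push_cast at *
    rw [show x + ((i : ℝ) + 1) * r = x + i * r + r by ring, this, ih]
    ring
  | pred i ih =>
    have := h (x + (-(i : ℝ) - 1) * r)
    push_cast at *
    rw [show x + (-(i : ℝ) - 1) * r + r = x + -(i : ℝ) * r by ring, ih] at this
    linarith

lemma exists_rep {r : ℝ} (hr : 0 < r) (x : ℝ) :
    ∃ k : ℤ, ∃ t : ℝ, x = t + k * r ∧ 0 ≤ t ∧ t < r := by
  refine ⟨⌊x / r⌋, x - ⌊x / r⌋ * r, by ring, ?_, ?_⟩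
  · have := (le_div_iff₀ hr).1 (Int.floor_le (x / r)); linarith
  · have := (div_lt_iff₀ hr).1 (Int.lt_floor_add_one (x / r)); linarith

/-- An equivariant map which on `[0, r]` is affine away from a finite set `B` of breakpoints is a
`NiceLift`: the translates of `B` by `rℤ` are the breakpoints on `ℝ`. -/
lemma niceLift_of_finset {m : ℕ} (hm : 2 ≤ m) {r r' : ℕ} (hr : 0 < r) {F : ℝ → ℝ}
    (hmono : StrictMono F) (hequi : ∀ x : ℝ, F (x + r) = F x + r') (B : Finset ℝ)
    (h0 : (0 : ℝ) ∈ B) (hB : ∀ b ∈ B, b ∈ ZInvM m) (hFB : ∀ b ∈ B, F b ∈ ZInvM m)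
    (haff : ∀ x y : ℝ, 0 ≤ x → x < y → y ≤ r → (∀ z ∈ Set.Ioo x y, z ∉ B) → AffOn m F x y) :
    NiceLift m r r' F := by
  have hr0 : (0 : ℝ) < r := by positivity
  have hkr : ∀ (k : ℤ) (n : ℕ), (k : ℝ) * n ∈ ZInvM m := fun k n => by
    have := ZInvM_int (m := m) (k * n)
    push_cast at this
    exact this
  refine ⟨hmono, hequi, ?_, ?_⟩
  · intro x
    obtain ⟨k, t, rfl, ht0, htr⟩ := exists_rep hr0 x
    rw [equi_int hequi, ZInvM_add_iff hm (hkr k r'), ZInvM_add_iff hm (hkr k r)]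
    have hne : (B.filter (· ≤ t)).Nonempty := ⟨0, by simp [h0, ht0]⟩
    obtain ⟨hbB, hbt⟩ := Finset.mem_filter.1 (Finset.max'_mem _ hne)
    have hb0 : 0 ≤ (B.filter (· ≤ t)).max' hne := Finset.le_max' _ _ (by simp [h0, ht0])
    have hmax : ∀ z ∈ B, z ≤ t → z ≤ (B.filter (· ≤ t)).max' hne :=
      fun z hz hzt => Finset.le_max' _ _ (by simp [hz, hzt])
    generalize (B.filter (· ≤ t)).max' hne = b at *
    rcases hbt.eq_or_lt with rfl | hlt
    · exact ⟨fun _ => hB _ hbB, fun _ => hFB _ hbB⟩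
    · exact (haff b t hb0 hlt htr.le fun z hz hzB =>
        absurd (hmax z hzB hz.2.le) (not_le.2 hz.1)).mem_iff hm hbt (hB _ hbB) (hFB _ hbB)
  · refine ⟨{x | ∃ b ∈ B, ∃ k : ℤ, x = b + k * r}, ?_, ?_, ?_⟩
    · rintro _ ⟨b, hb, k, rfl⟩
      exact ZInvM_add hm (hB b hb) (hkr k r)
    · intro a c
      have : (⋃ b ∈ (B : Set ℝ), ⋃ k ∈ Set.Icc ⌈(a - b) / r⌉ ⌊(c - b) / r⌋,
          ({b + (k : ℝ) * r} : Set ℝ)).Finite :=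
        B.finite_toSet.biUnion fun b _ => (Set.finite_Icc _ _).biUnion fun k _ =>
          Set.finite_singleton _
      refine this.subset ?_
      rintro _ ⟨⟨b, hb, k, rfl⟩, h1, h2⟩
      simp only [Set.mem_iUnion]
      refine ⟨b, hb, k, ⟨?_, ?_⟩, rfl⟩
      · rw [Int.ceil_le, div_le_iff₀ hr0]; linarith
      · rw [Int.le_floor, le_div_iff₀ hr0]; linarith
    · intro x y hxy h
      obtain ⟨k, t, rfl, ht0, htr⟩ := exists_rep hr0 x
      have hyr : y - k * r ≤ r := by
        by_contra! hcon
        refine h ((k + 1) * r) ⟨by linarith, by linarith⟩ ⟨0, h0, k + 1, by push_cast; ring⟩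
      obtain ⟨s, β, hs⟩ := haff t (y - k * r) ht0 (by linarith) hyr fun z hz hzB =>
        h (z + k * r) ⟨by linarith [hz.1], by linarith [hz.2]⟩ ⟨z, hzB, k, rfl⟩
      refine ⟨s, β + k * r' - (m : ℝ) ^ s * (k * r), fun z hz => ?_⟩
      have h1 := equi_int hequi k (z - k * r)
      rw [hs (z - k * r) ⟨by linarith [hz.1], by linarith [hz.2]⟩] at h1
      rw [show z - k * r + k * r = z by ring] at h1
      rw [h1]
      ring

lemma IsPLmLift.niceLift {m : ℕ} (hm : 2 ≤ m) {r r' : ℕ} (hr : 0 < r) {F : ℝ → ℝ}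
    (h : IsPLmLift m r r' F) : NiceLift m r r' F := by
  classical
  obtain ⟨hmono, hequi, n, a, ha, ha0, har, haZ, hFZ, haff⟩ := h
  refine niceLift_of_finset hm hr hmono hequi (Finset.univ.image a) ?_ ?_ ?_ ?_
  · exact Finset.mem_image.2 ⟨0, Finset.mem_univ _, ha0⟩
  · simpa using haZ
  · simpa using hFZ
  · intro x y hx hxy hy hz
    -- `i` is the piece with `a i ≤ x < a (i + 1)`.
    have hne : (Finset.univ.filter fun i => a i ≤ x).Nonempty := ⟨0, by simp [ha0, hx]⟩
    have hi := (Finset.mem_filter.1 (Finset.max'_mem _ hne)).2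
    have hmax : ∀ j, a j ≤ x → j ≤ (Finset.univ.filter fun i => a i ≤ x).max' hne :=
      fun j hj => Finset.le_max' _ _ (by simp [hj])
    generalize (Finset.univ.filter fun i => a i ≤ x).max' hne = i at *
    induction i using Fin.lastCases with
    | last => linarith
    | cast i =>
      have h1 : x < a i.succ := by
        by_contra! hcon
        exact absurd (hmax _ hcon) (not_le.2 i.castSucc_lt_succ)
      have h2 : y ≤ a i.succ := by
        by_contra! hcon
        exact hz _ ⟨h1, hcon⟩ (Finset.mem_image.2 ⟨_, Finset.mem_univ _, rfl⟩)
      obtain ⟨s, β, hs⟩ := haff i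
      exact ⟨s, β, fun z hz => hs z ⟨hi.trans hz.1, hz.2.trans h2⟩⟩

lemma NiceLift.isPLmLift {m : ℕ} {r r' : ℕ} (hr : 0 < r) {F : ℝ → ℝ}
    (h : NiceLift m r r' F) : IsPLmLift m r r' F := by
  classical
  have hr0 : (0 : ℝ) < r := by positivity
  refine ⟨h.mono, h.equi, ?_⟩
  obtain ⟨A, hA, hAf, hAa⟩ := h.pl
  obtain ⟨B, hB⟩ : ∃ B : Finset ℝ, ∀ x, x ∈ B ↔ (x ∈ A ∧ 0 ≤ x ∧ x ≤ r) ∨ x = 0 ∨ x = r :=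
    ⟨(hAf 0 r).toFinset ∪ {0, (r : ℝ)}, fun x => by simp; tauto⟩
  have hB0 : ∀ x ∈ B, 0 ≤ x := fun x hx => by
    rcases (hB x).1 hx with h | rfl | rfl
    exacts [h.2.1, le_rfl, hr0.le]
  have hBr : ∀ x ∈ B, x ≤ r := fun x hx => by
    rcases (hB x).1 hx with h | rfl | rfl
    exacts [h.2.2, hr0.le, le_rfl]
  have hBZ : ∀ x ∈ B, x ∈ ZInvM m := fun x hx => by
    rcases (hB x).1 hx with h | rfl | rfl
    exacts [hA h.1, by simpa using ZInvM_nat (m := m) 0, ZInvM_nat r]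
  have h0 : (0 : ℝ) ∈ B := (hB _).2 (by simp)
  have hrB : (r : ℝ) ∈ B := (hB _).2 (by simp)
  obtain ⟨n, hn⟩ : ∃ n, B.card = n + 1 :=
    Nat.exists_eq_succ_of_ne_zero (Finset.card_ne_zero_of_mem h0)
  have hmem : ∀ i, B.orderEmbOfFin hn i ∈ B := fun i => Finset.orderEmbOfFin_mem B hn i
  have hsurj : ∀ x ∈ B, ∃ i, B.orderEmbOfFin hn i = x := fun x hx => by
    have := Finset.range_orderEmbOfFin B hn
    exact (this.symm ▸ hx : x ∈ Set.range (B.orderEmbOfFin hn))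
  have hsm := (B.orderEmbOfFin hn).strictMono
  refine ⟨n, B.orderEmbOfFin hn, hsm, ?_, ?_, fun i => hBZ _ (hmem i),
    fun i => (h.mem_iff _).2 (hBZ _ (hmem i)), fun i => ?_⟩
  · obtain ⟨i, hi⟩ := hsurj 0 h0
    refine le_antisymm ?_ (hB0 _ (hmem _))
    rw [← hi]
    exact hsm.monotone (Fin.zero_le i)
  · obtain ⟨i, hi⟩ := hsurj r hrB
    refine le_antisymm (hBr _ (hmem _)) ?_
    rw [← hi]
    exact hsm.monotone (Fin.le_last i)
  · refine hAa _ _ (hsm i.castSucc_lt_succ) fun z hz hzA => ?_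
    obtain ⟨j, rfl⟩ := hsurj z ((hB z).2 (Or.inl
      ⟨hzA, (hB0 _ (hmem _)).trans hz.1.le, hz.2.le.trans (hBr _ (hmem _))⟩))
    have h1 := hsm.lt_iff_lt.1 hz.1
    have h2 := hsm.lt_iff_lt.1 hz.2
    rw [Fin.lt_def] at h1 h2
    simp only [Fin.val_castSucc, Fin.val_succ] at h1 h2
    omega

/-! ### Conjugation by a homeomorphism of circles -/

lemma InT_permCongr {m : ℕ} (hm : 2 ≤ m) {r r' : ℕ} (hr : 0 < r) (hr' : 0 < r') {H H' : ℝ → ℝ}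
    (hH : NiceLift m r r' H) (hH' : NiceLift m r' r H')
    (e : AddCircle (r : ℝ) ≃ AddCircle (r' : ℝ)) (he : ∀ x : ℝ, e ↑x = ↑(H x))
    (he' : ∀ x : ℝ, e.symm ↑x = ↑(H' x)) {f : Equiv.Perm (AddCircle (r : ℝ))} (hf : InT r m f) :
    InT r' m (e.permCongr f) := by
  obtain ⟨F, hF, hfF⟩ := hf
  refine ⟨H ∘ F ∘ H', (hH.comp hm ((hF.niceLift hm hr).comp hm hH')).isPLmLift hr', fun x => ?_⟩
  rw [Equiv.permCongr_apply, he', hfF, he]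
  rfl

lemma TGroup_mulEquiv {m : ℕ} (hm : 2 ≤ m) {r r' : ℕ} (hr : 0 < r) (hr' : 0 < r') {H H' : ℝ → ℝ}
    (hH : NiceLift m r r' H) (hH' : NiceLift m r' r H') (h1 : ∀ x, H' (H x) = x)
    (h2 : ∀ x, H (H' x) = x) : Nonempty (TGroup r m ≃* TGroup r' m) := by
  have p1 : Function.Periodic (fun x => (H x : AddCircle (r' : ℝ))) r := fun x => by
    simp [hH.equi]
  have p2 : Function.Periodic (fun x => (H' x : AddCircle (r : ℝ))) r' := fun x => by
    simp [hH'.equi]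
  let e : AddCircle (r : ℝ) ≃ AddCircle (r' : ℝ) :=
    { toFun := p1.lift
      invFun := p2.lift
      left_inv := fun x => by
        induction x using QuotientAddGroup.induction_on with
        | H x => rw [p1.lift_coe, p2.lift_coe, h1]
      right_inv := fun x => by
        induction x using QuotientAddGroup.induction_on with
        | H x => rw [p2.lift_coe, p1.lift_coe, h2] }
  have he : ∀ x : ℝ, e ↑x = ↑(H x) := fun x => p1.lift_coe x
  have he' : ∀ x : ℝ, e.symm ↑x = ↑(H' x) := fun x => p2.lift_coe x
  have himg : (e.permCongrHom : _ → _) '' {f | InT r m f} = {f | InT r' m f} := by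
    ext g
    constructor
    · rintro ⟨f, hf, rfl⟩
      exact InT_permCongr hm hr hr' hH hH' e he he' hf
    · intro hg
      refine ⟨e.symm.permCongr g, InT_permCongr hm hr' hr hH' hH e.symm he' he hg, ?_⟩
      ext x
      simp [Equiv.permCongrHom]
  have hmap : (TGroup r m).map e.permCongrHom.toMonoidHom = TGroup r' m := by
    rw [TGroup, TGroup, MonoidHom.map_closure, ← himg]
    rfl
  exact ⟨(e.permCongrHom.subgroupMap (TGroup r m)).trans (MulEquiv.subgroupCongr hmap)⟩

/-! ### Equivariant extension of a homeomorphism `[0, r] → [0, r']` -/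

/-- The extension to `ℝ` of `φ` restricted to `[0, r)`, equivariant with respect to the
translation by `r` on the source and by `r'` on the target. -/
noncomputable def equiExt (r r' : ℝ) (φ : ℝ → ℝ) (x : ℝ) : ℝ :=
  φ (x - ⌊x / r⌋ * r) + ⌊x / r⌋ * r'

lemma equiExt_apply {r : ℝ} (hr : 0 < r) (r' : ℝ) (φ : ℝ → ℝ) {t : ℝ} (k : ℤ) (h0 : 0 ≤ t)
    (ht : t < r) : equiExt r r' φ (t + k * r) = φ t + k * r' := by
  have : ⌊(t + k * r) / r⌋ = k := by
    rw [Int.floor_eq_iff, le_div_iff₀ hr, div_lt_iff₀ hr]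
    constructor <;> linarith
  rw [equiExt, this]
  ring_nf

lemma equiExt_equi {r : ℝ} (hr : 0 < r) (r' : ℝ) (φ : ℝ → ℝ) (x : ℝ) :
    equiExt r r' φ (x + r) = equiExt r r' φ x + r' := by
  obtain ⟨k, t, rfl, h0, ht⟩ := exists_rep hr x
  have := equiExt_apply hr r' φ (k + 1) h0 ht
  push_cast at this
  rw [equiExt_apply hr r' φ k h0 ht, show t + k * r + r = t + (k + 1) * r by ring, this]
  ring

lemma equiExt_strictMono {r r' : ℝ} (hr : 0 < r) {φ : ℝ → ℝ} (hφ : StrictMono φ) (h0 : φ 0 = 0)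
    (h1 : φ r = r') : StrictMono (equiExt r r' φ) := by
  intro x y hxy
  obtain ⟨k, t, rfl, ht0, ht⟩ := exists_rep hr x
  obtain ⟨l, u, rfl, hu0, hu⟩ := exists_rep hr y
  rw [equiExt_apply hr r' φ k ht0 ht, equiExt_apply hr r' φ l hu0 hu]
  have hr' : 0 < r' := by rw [← h1, ← h0]; exact hφ hr
  have hkl : k ≤ l := by
    by_contra! hcon
    have : (l : ℝ) + 1 ≤ k := by exact_mod_cast hcon
    nlinarith
  rcases hkl.eq_or_lt with rfl | hlt
  · have := hφ (show t < u by linarith)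
    linarith
  · have hk : (k : ℝ) + 1 ≤ l := by exact_mod_cast hlt
    have a1 := hφ ht
    have a2 := hφ.monotone hu0
    nlinarith

lemma equiExt_inv {r r' : ℝ} (hr : 0 < r) {φ ψ : ℝ → ℝ} (hφ : StrictMono φ) (h0 : φ 0 = 0)
    (h1 : φ r = r') (hψ : ∀ t, ψ (φ t) = t) (x : ℝ) :
    equiExt r' r ψ (equiExt r r' φ x) = x := by
  obtain ⟨k, t, rfl, ht0, ht⟩ := exists_rep hr x
  have hr' : 0 < r' := by rw [← h1, ← h0]; exact hφ hr
  rw [equiExt_apply hr r' φ k ht0 ht, equiExt_apply hr' r ψ k (h0 ▸ hφ.monotone ht0)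
    (h1 ▸ hφ ht), hψ]

lemma equiExt_eq {r r' : ℝ} (hr : 0 < r) {φ : ℝ → ℝ} (h0 : φ 0 = 0)
    (h1 : φ r = r') {t : ℝ} (ht0 : 0 ≤ t) (ht : t ≤ r) : equiExt r r' φ t = φ t := by
  rcases ht.eq_or_lt with rfl | hlt
  · have := equiExt_apply hr r' φ 1 le_rfl hr
    simpa [h0, h1] using this
  · simpa using equiExt_apply hr r' φ 0 ht0 hlt

/-- A homeomorphism `[0, r] → [0, r']` with a single breakpoint `c`, of slope `m ^ s₁` before and
`m ^ s₂` after `c`, extends to a `NiceLift`. -/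
lemma equiExt_niceLift {m : ℕ} (hm : 2 ≤ m) {r r' : ℕ} (hr : 0 < r) {φ : ℝ → ℝ}
    (hφ : StrictMono φ) (h0 : φ 0 = 0) (h1 : φ r = r') {c : ℝ} (hc0 : 0 ≤ c) (hcr : c ≤ r)
    (hc : c ∈ ZInvM m) (hφc : φ c ∈ ZInvM m) (s₁ s₂ : ℤ) (β₁ β₂ : ℝ)
    (hφ1 : ∀ t ≤ c, φ t = (m : ℝ) ^ s₁ * t + β₁) (hφ2 : ∀ t, c ≤ t → φ t = (m : ℝ) ^ s₂ * t + β₂) :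
    NiceLift m r r' (equiExt r r' φ) := by
  have hr0 : (0 : ℝ) < r := by positivity
  have hz : (0 : ℝ) ∈ ZInvM m := by simpa using ZInvM_nat (m := m) 0
  refine niceLift_of_finset hm hr (equiExt_strictMono hr0 hφ h0 h1) (equiExt_equi hr0 _ φ) {0, c}
    (by simp) ?_ ?_ ?_
  · simp [hz, hc]
  · simp [equiExt_eq hr0 h0 h1 le_rfl hr0.le, equiExt_eq hr0 h0 h1 hc0 hcr, h0, hz, hφc]
  · intro x y hx hxy hy h
    rcases le_or_gt y c with hyc | hyc
    · exact ⟨s₁, β₁, fun z hz => by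
        rw [equiExt_eq hr0 h0 h1 (hx.trans hz.1) (hz.2.trans hy), hφ1 z (hz.2.trans hyc)]⟩
    · have hxc : c ≤ x := by
        by_contra! hcon
        exact h c ⟨hcon, hyc⟩ (by simp)
      exact ⟨s₂, β₂, fun z hz => by
        rw [equiExt_eq hr0 h0 h1 (hx.trans hz.1) (hz.2.trans hy), hφ2 z (hxc.trans hz.1)]⟩

/-! ### The isomorphism -/

lemma TGroup_step {m : ℕ} (hm : 2 ≤ m) {r : ℕ} (hr : 0 < r) :
    Nonempty (TGroup r m ≃* TGroup (r + (m - 1)) m) := by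
  have hm2 : (2 : ℝ) ≤ m := by exact_mod_cast hm
  have hm0 : (0 : ℝ) < m := by linarith
  have hr1 : (1 : ℝ) ≤ r := by exact_mod_cast hr
  have hcast : ((r + (m - 1) : ℕ) : ℝ) = r + (m - 1) := by
    rw [Nat.cast_add, Nat.cast_sub (by omega), Nat.cast_one]
  let φ : ℝ → ℝ := fun t => min (m * t) (t + (m - 1))
  let ψ : ℝ → ℝ := fun u => max (u / m) (u - (m - 1))
  have φ1 : ∀ t ≤ (1 : ℝ), φ t = m * t := fun t ht => min_eq_left (by nlinarith)
  have φ2 : ∀ t, (1 : ℝ) ≤ t → φ t = t + (m - 1) := fun t ht => min_eq_right (by nlinarith)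
  have ψ1 : ∀ u ≤ (m : ℝ), ψ u = u / m := fun u hu => max_eq_left (by
    rw [le_div_iff₀ hm0]; nlinarith)
  have ψ2 : ∀ u, (m : ℝ) ≤ u → ψ u = u - (m - 1) := fun u hu => max_eq_right (by
    rw [div_le_iff₀ hm0]; nlinarith)
  have hψφ : ∀ t, ψ (φ t) = t := fun t => by
    rcases le_total t 1 with ht | ht
    · rw [φ1 t ht, ψ1 _ (by nlinarith)]; field_simp
    · rw [φ2 t ht, ψ2 _ (by linarith)]; ring
  have hφψ : ∀ u, φ (ψ u) = u := fun u => by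
    rcases le_total u m with hu | hu
    · rw [ψ1 u hu, φ1 _ (by rw [div_le_iff₀ hm0]; linarith)]; field_simp
    · rw [ψ2 u hu, φ2 _ (by linarith)]; ring
  have hφ : StrictMono φ := fun x y hxy =>
    lt_min (min_lt_of_left_lt (by nlinarith)) (min_lt_of_right_lt (by linarith))
  have hψ : StrictMono ψ := fun x y hxy => by
    rw [← hφ.lt_iff_lt, hφψ, hφψ]; exact hxy
  have φ0 : φ 0 = 0 := by rw [φ1 0 zero_le_one, mul_zero]
  have ψ0 : ψ 0 = 0 := by rw [ψ1 0 hm0.le, zero_div]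
  have φr : φ r = (r + (m - 1) : ℕ) := by rw [φ2 _ hr1, hcast]
  have ψr : ψ (r + (m - 1) : ℕ) = r := by rw [← φr, hψφ]
  have hr0 : (0 : ℝ) < r := by linarith
  have hr0' : (0 : ℝ) < (r + (m - 1) : ℕ) := by rw [hcast]; linarith
  refine TGroup_mulEquiv hm hr (by omega)
    (H := equiExt r (r + (m - 1) : ℕ) φ) (H' := equiExt (r + (m - 1) : ℕ) r ψ) ?_ ?_
    (equiExt_inv hr0 hφ φ0 φr hψφ) (equiExt_inv hr0' hψ ψ0 ψr hφψ)
  · refine equiExt_niceLift hm hr hφ φ0 φr (c := 1) zero_le_one hr1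
      (by simpa using ZInvM_nat (m := m) 1) ?_ 1 0 0 (m - 1) ?_ ?_
    · rw [φ1 1 le_rfl, mul_one]; exact ZInvM_nat m
    · intro t ht; rw [φ1 t ht]; simp
    · intro t ht; rw [φ2 t ht]; simp
  · refine equiExt_niceLift hm (by omega) hψ ψ0 ψr (c := m) hm0.le (by rw [hcast]; linarith)
      (ZInvM_nat m) ?_ (-1) 0 0 (-(m - 1)) ?_ ?_
    · rw [ψ1 m le_rfl, div_self hm0.ne']; simpa using ZInvM_nat (m := m) 1
    · intro t ht; rw [ψ1 t ht, zpow_neg_one]; ring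
    · intro t ht; rw [ψ2 t ht]; simp; ring

lemma TGroup_steps {m : ℕ} (hm : 2 ≤ m) {r : ℕ} (hr : 0 < r) (k : ℕ) :
    Nonempty (TGroup r m ≃* TGroup (r + (m - 1) * k) m) := by
  induction k with
  | zero => exact ⟨MulEquiv.refl _⟩
  | succ k ih =>
    obtain ⟨e⟩ := ih
    obtain ⟨e₂⟩ := TGroup_step hm (r := r + (m - 1) * k) (by omega)
    rw [Nat.mul_succ, ← add_assoc]
    exact ⟨e.trans e₂⟩

/-- Bieri–Strebel isomorphism: if `r ≡ r' (mod m-1)` then `T_{r,m} ≅ T_{r',m}`;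
consequently every `T_{r',m}` is isomorphic to one of the `m-1` groups `T_{r,m}` with
`r ∈ {1, ..., m-1}`. -/
theorem bieri_strebel_isomorphism (m : ℕ) (hm : 2 ≤ m) :
    (∀ r r' : ℕ, 0 < r → 0 < r' → r ≡ r' [MOD m - 1] →
      Nonempty (TGroup r m ≃* TGroup r' m)) ∧
    (∀ r' : ℕ, 0 < r' →
      ∃ r : ℕ, 1 ≤ r ∧ r ≤ m - 1 ∧ Nonempty (TGroup r m ≃* TGroup r' m)) := by
  have main : ∀ r r' : ℕ, 0 < r → r ≤ r' → r ≡ r' [MOD m - 1] →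
      Nonempty (TGroup r m ≃* TGroup r' m) := by
    intro r r' hr hle h
    obtain ⟨k, hk⟩ := (Nat.modEq_iff_dvd' hle).1 h
    obtain rfl : r' = r + (m - 1) * k := by omega
    exact TGroup_steps hm hr k
  refine ⟨fun r r' hr hr' h => ?_, fun r' hr' => ?_⟩
  · rcases le_total r r' with hle | hle
    · exact main r r' hr hle h
    · obtain ⟨e⟩ := main r' r hr' hle h.symm
      exact ⟨e.symm⟩
  · have hlt := Nat.mod_lt (r' - 1) (show 0 < m - 1 by omega)
    have hle := Nat.mod_le (r' - 1) (m - 1)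
    -- The representative of `r'` in `{1, ..., m - 1}` rather than in `{0, ..., m - 2}`.
    refine ⟨(r' - 1) % (m - 1) + 1, by omega, by omega, main _ _ (by omega) (by omega) ?_⟩
    have := (Nat.mod_modEq (r' - 1) (m - 1)).add_right 1
    rwa [Nat.sub_add_cancel hr'] at this
end

section
/- For every positive integer r, the group T_{r,2} is isomorphic to the Thompson group T = T_{1,2}. -/
/-!
The circles of length `r` and of length `1` are themselves related by a `PL_2` homeomorphism:
cut `[0, 1]` into the `r` dyadic intervals `[0, 1/2], [1/2, 3/4], …` (the last two having the same
length if `r ≥ 2`) and send `[i, i + 1]` affinely to the one of index `i`, counting from `0`.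
Conjugation by this map carries the generators of `T_{r,2}` onto those of
`T_{1,2}`, because `PL_2` lifts are closed under composition and inversion.

Closure is proved through an inductive form `PLChain F u v` of the statement that `F` is
piecewise affine on `[u, v]` with dyadic data. Chains can be concatenated (`PLChain.trans`), cut at
any dyadic point (`PLChain.split`), composed (`PLChain.comp`) and inverted (`PLChain.inv`), and
equivariance extends them from a fundamental domain to every dyadic interval
(`PLChain.of_equivariant`).
-/

open Filter Topology

/-! ### Dyadic numbers -/

lemma dy_mul_zpow {x : ℝ} (hx : x ∈ ZInvM 2) (t : ℤ) : x * 2 ^ t ∈ ZInvM 2 := by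
  obtain ⟨N, s, rfl⟩ := hx
  refine ⟨N, s + t, ?_⟩
  rw [zpow_add₀ (by norm_num)]
  push_cast
  ring

lemma dy_int (n : ℤ) : (n : ℝ) ∈ ZInvM 2 := ⟨n, 0, by simp⟩

lemma dy_neg {x : ℝ} (hx : x ∈ ZInvM 2) : -x ∈ ZInvM 2 := by
  obtain ⟨N, s, rfl⟩ := hx
  exact ⟨-N, s, by push_cast; ring⟩

lemma dy_add {x y : ℝ} (hx : x ∈ ZInvM 2) (hy : y ∈ ZInvM 2) : x + y ∈ ZInvM 2 := by
  obtain ⟨N, s, rfl⟩ := hx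
  obtain ⟨M, t, rfl⟩ := hy
  wlog h : s ≤ t generalizing N M s t
  · rw [add_comm]
    exact this M t N s (by omega)
  obtain ⟨k, rfl⟩ := Int.le.dest h
  refine ⟨N + M * 2 ^ k, s, ?_⟩
  push_cast
  rw [zpow_add₀ (by norm_num), zpow_natCast]
  ring

lemma dy_sub {x y : ℝ} (hx : x ∈ ZInvM 2) (hy : y ∈ ZInvM 2) : x - y ∈ ZInvM 2 := by
  rw [sub_eq_add_neg]
  exact dy_add hx (dy_neg hy)

/-! ### Piecewise affine chains -/

/-- `PLChain F u v` says that `[u, v]` (possibly reduced to a point) has a finite subdivision with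
dyadic points and dyadic images under `F`, on each piece of which `F` is affine with slope a power
of `2`; the subdivision is listed from left to right. -/
inductive PLChain (F : ℝ → ℝ) : ℝ → ℝ → Prop
  | nil (u : ℝ) : u ∈ ZInvM 2 → F u ∈ ZInvM 2 → PLChain F u u
  | cons (u v w : ℝ) (s : ℤ) (β : ℝ) : u ∈ ZInvM 2 → F u ∈ ZInvM 2 → u < v →
      (∀ x ∈ Set.Icc u v, F x = 2 ^ s * x + β) → PLChain F v w → PLChain F u w

namespace PLChain

variable {F G : ℝ → ℝ} {u v w : ℝ}

lemma left (h : PLChain F u v) : u ∈ ZInvM 2 ∧ F u ∈ ZInvM 2 := by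
  cases h with
  | nil _ h1 h2 => exact ⟨h1, h2⟩
  | cons _ _ _ _ _ h1 h2 => exact ⟨h1, h2⟩

lemma right (h : PLChain F u v) : v ∈ ZInvM 2 ∧ F v ∈ ZInvM 2 := by
  induction h with
  | nil _ h1 h2 => exact ⟨h1, h2⟩
  | cons _ _ _ _ _ _ _ _ _ _ ih => exact ih

lemma le (h : PLChain F u v) : u ≤ v := by
  induction h with
  | nil _ _ _ => exact le_rfl
  | cons _ _ _ _ _ _ _ h _ _ ih => exact h.le.trans ih

lemma trans (h : PLChain F u v) (h' : PLChain F v w) : PLChain F u w := by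
  induction h with
  | nil _ _ _ => exact h'
  | cons _ _ _ s β h1 h2 h3 h4 _ ih => exact cons _ _ _ s β h1 h2 h3 h4 (ih h')

lemma single (hu : u ∈ ZInvM 2) (hFu : F u ∈ ZInvM 2) (hv : v ∈ ZInvM 2) (hFv : F v ∈ ZInvM 2)
    (huv : u ≤ v) (s : ℤ) (β : ℝ) (h : ∀ x ∈ Set.Icc u v, F x = 2 ^ s * x + β) :
    PLChain F u v := by
  rcases huv.eq_or_lt with rfl | huv
  · exact nil _ hu hFu
  · exact cons _ _ _ s β hu hFu huv h (nil _ hv hFv)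

/-- A chain can be cut at any dyadic point: on the piece `[a, b]` containing `v`,
`F v = F a + 2 ^ s * (v - a)` is dyadic. -/
lemma split (h : PLChain F u w) : ∀ v ∈ ZInvM 2, u ≤ v → v ≤ w →
    PLChain F u v ∧ PLChain F v w := by
  induction h with
  | nil u h1 h2 =>
    intro v _ h3 h4
    obtain rfl := le_antisymm h3 h4
    exact ⟨nil _ h1 h2, nil _ h1 h2⟩
  | cons a b c s β h1 h2 h3 h4 h5 ih =>
    intro v hv h6 h7
    rcases le_total b v with hb | hb
    · obtain ⟨i1, i2⟩ := ih v hv hb h7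
      exact ⟨cons _ _ _ s β h1 h2 h3 h4 i1, i2⟩
    · have hFv : F v ∈ ZInvM 2 := by
        have e1 := h4 a ⟨le_rfl, h3.le⟩
        have e2 := h4 v ⟨h6, hb⟩
        have : F v = F a + (v - a) * 2 ^ s := by rw [e1, e2]; ring
        rw [this]
        exact dy_add h2 (dy_mul_zpow (dy_sub hv h1) s)
      refine ⟨single h1 h2 hv hFv h6 s β fun x hx => h4 x ⟨hx.1, hx.2.trans hb⟩, ?_⟩
      exact (single hv hFv h5.left.1 h5.left.2 hb s β
        fun x hx => h4 x ⟨h6.trans hx.1, hx.2⟩).trans h5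

/-- Composition of a chain with a single affine piece on the inside. -/
lemma comp_affine {p q : ℝ} (h : PLChain G p q) (s : ℤ) (β : ℝ) :
    ∀ u v, u ∈ ZInvM 2 → v ∈ ZInvM 2 → u ≤ v → F u = p → F v = q →
      (∀ x ∈ Set.Icc u v, F x = 2 ^ s * x + β) → PLChain (fun x => G (F x)) u v := by
  have hs : (0 : ℝ) < 2 ^ s := by positivity
  induction h with
  | nil p h1 h2 =>
    intro u v hu hv huv e1 e2 h
    have e3 := h u ⟨le_rfl, huv⟩
    have e4 := h v ⟨huv, le_rfl⟩
    have : u = v := mul_left_cancel₀ hs.ne' (by linarith)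
    subst this
    exact nil _ hu (by simpa [e1] using h2)
  | cons p p' q t γ h1 h2 h3 h4 h5 ih =>
    intro u v hu hv huv e1 e2 h
    have e3 := h u ⟨le_rfl, huv⟩
    have e4 := h v ⟨huv, le_rfl⟩
    -- `u'` is the preimage of the first breakpoint `p'` under the affine piece
    obtain ⟨u', hu'⟩ : ∃ u', u' = u + (p' - p) * 2 ^ (-s) := ⟨_, rfl⟩
    have hp' : 2 ^ s * u' = 2 ^ s * u + (p' - p) := by
      rw [hu', zpow_neg]; field_simp
    have hd : u' ∈ ZInvM 2 := by
      rw [hu']; exact dy_add hu (dy_mul_zpow (dy_sub h5.left.1 h1) _)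
    have l1 : u < u' := lt_of_mul_lt_mul_left (by linarith) hs.le
    have l2 : u' ≤ v := le_of_mul_le_mul_left (by linarith [h5.le]) hs
    have e5 := h u' ⟨l1.le, l2⟩
    refine cons u u' v (t + s) (2 ^ t * β + γ) hu (by simpa [e1] using h2) l1 ?_
      (ih u' v hd hv l2 (by linarith) e2 fun x hx => h x ⟨l1.le.trans hx.1, hx.2⟩)
    intro x hx
    have e6 := h x ⟨hx.1, hx.2.trans l2⟩
    have m1 := mul_le_mul_of_nonneg_left hx.1 hs.le
    have m2 := mul_le_mul_of_nonneg_left hx.2 hs.le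
    change G (F x) = _
    rw [h4 (F x) ⟨by linarith, by linarith⟩, e6, zpow_add₀ (by norm_num)]
    ring

lemma comp (hm : Monotone F) (h : PLChain F u w) :
    PLChain G (F u) (F w) → PLChain (fun x => G (F x)) u w := by
  induction h with
  | nil u h1 h2 => exact fun h => nil _ h1 h.left.2
  | cons a b c s β h1 h2 h3 h4 h5 ih =>
    intro h
    obtain ⟨i1, i2⟩ := h.split (F b) h5.left.2 (hm h3.le) (hm h5.le)
    exact (i1.comp_affine s β a b h1 h5.left.1 h3.le rfl rfl h4).trans (ih i2)

lemma inv (hm : StrictMono F) (hl : ∀ x, G (F x) = x) (hr : ∀ y, F (G y) = y)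
    (h : PLChain F u w) : PLChain G (F u) (F w) := by
  induction h with
  | nil u h1 h2 => exact nil _ h2 (by rwa [hl])
  | cons a b c s β h1 h2 h3 h4 h5 ih =>
    refine cons _ (F b) _ (-s) (-(2 ^ (-s) * β)) h2 (by rwa [hl]) (hm h3) ?_ ih
    intro y hy
    have i1 : a ≤ G y := hm.le_iff_le.1 (by rw [hr]; exact hy.1)
    have i2 : G y ≤ b := hm.le_iff_le.1 (by rw [hr]; exact hy.2)
    have e := h4 (G y) ⟨i1, i2⟩
    rw [hr] at e
    have hs : (0 : ℝ) < 2 ^ s := by positivity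
    have e' : 2 ^ (-s) * (y - β) = G y := by
      rw [show y - β = 2 ^ s * G y by linarith, zpow_neg, inv_mul_cancel_left₀ hs.ne']
    linarith

lemma congr (h : PLChain F u w) : (∀ x ∈ Set.Icc u w, F x = G x) → PLChain G u w := by
  induction h with
  | nil u h1 h2 => exact fun e => nil _ h1 (by rwa [← e u ⟨le_rfl, le_rfl⟩])
  | cons a b c s β h1 h2 h3 h4 h5 ih =>
    intro e
    have hbc := h5.le
    refine cons a b c s β h1 (by rwa [← e a ⟨le_rfl, h3.le.trans hbc⟩]) h3 ?_
      (ih fun x hx => e x ⟨h3.le.trans hx.1, hx.2⟩)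
    intro x hx
    rw [← e x ⟨hx.1, hx.2.trans hbc⟩]
    exact h4 x hx

lemma of_translate {r r' : ℝ} (hr : r ∈ ZInvM 2) (hr' : r' ∈ ZInvM 2)
    (hF : ∀ x, F (x + r) = F x + r') (h : PLChain F u w) : PLChain F (u + r) (w + r) := by
  induction h with
  | nil u h1 h2 => exact nil _ (dy_add h1 hr) (by rw [hF]; exact dy_add h2 hr')
  | cons a b c s β h1 h2 h3 h4 h5 ih =>
    refine cons _ (b + r) _ s (β + r' - 2 ^ s * r) (dy_add h1 hr)
      (by rw [hF]; exact dy_add h2 hr') (by linarith) ?_ ih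
    intro x hx
    have e := h4 (x - r) ⟨by linarith [hx.1], by linarith [hx.2]⟩
    have e' := hF (x - r)
    rw [sub_add_cancel] at e'
    rw [e', e]
    ring

/-- An equivariant map which is piecewise affine on a fundamental domain is piecewise affine on
every dyadic interval. -/
lemma of_equivariant {r r' : ℝ} (hr0 : 0 < r) (hr : r ∈ ZInvM 2) (hr' : r' ∈ ZInvM 2)
    (hF : ∀ x, F (x + r) = F x + r') (h : PLChain F 0 r)
    (hu : u ∈ ZInvM 2) (hw : w ∈ ZInvM 2) (huw : u ≤ w) : PLChain F u w := by
  have hF' : ∀ x, F (x + -r) = F x + -r' := fun x => by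
    have := hF (x + -r)
    rw [neg_add_cancel_right] at this
    linarith
  have key : ∀ n : ℕ, PLChain F (-(n * r)) (n * r) := by
    intro n
    induction n with
    | zero => simpa using nil 0 h.left.1 h.left.2
    | succ n ih =>
      -- `[-(n + 1) r, -r]` and `[r, (n + 1) r]` lie in the translates of `[-n r, n r]` by `∓r`
      have hp := ih.of_translate hr hr' hF
      have hn := ih.of_translate (dy_neg hr) (dy_neg hr') hF'
      have h0 := h.of_translate (dy_neg hr) (dy_neg hr') hF'
      have hn0 : (0 : ℝ) ≤ n * r := by positivity
      have d0 : (0 : ℝ) ∈ ZInvM 2 := h.left.1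
      have dr := h0.left.1
      have a1 := (hn.split (-r) (by simpa using dr) (by linarith) (by linarith)).1
      have a2 := (hp.split r hr (by linarith) (by linarith)).2
      have a3 : PLChain F (-r) r := by
        have : PLChain F (-r) 0 := by simpa using h0
        exact this.trans h
      have := (a1.trans a3).trans a2
      convert this using 1 <;> push_cast <;> ring
  obtain ⟨n, hn⟩ := exists_nat_ge (max (|u| / r) (|w| / r))
  have b1 : |u| ≤ n * r := (div_le_iff₀ hr0).1 ((le_max_left _ _).trans hn)
  have b2 : |w| ≤ n * r := (div_le_iff₀ hr0).1 ((le_max_right _ _).trans hn)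
  obtain ⟨b3, b4⟩ := abs_le.1 b1
  obtain ⟨b5, b6⟩ := abs_le.1 b2
  exact ((((key n).split u hu b3 b4).2).split w hw huw b6).1

end PLChain

/-! ### Lifts -/

lemma PLChain.of_fin {F : ℝ → ℝ} : ∀ (n : ℕ) (a : Fin (n + 1) → ℝ), StrictMono a →
    (∀ i, a i ∈ ZInvM 2) → (∀ i, F (a i) ∈ ZInvM 2) →
    (∀ i : Fin n, ∃ (s : ℤ) (β : ℝ), ∀ x ∈ Set.Icc (a i.castSucc) (a i.succ),
      F x = 2 ^ s * x + β) → PLChain F (a 0) (a (Fin.last n)) := by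
  intro n
  induction n with
  | zero => exact fun a _ h1 h2 _ => PLChain.nil _ (h1 0) (h2 0)
  | succ n ih =>
    intro a ha h1 h2 h3
    obtain ⟨s, β, h⟩ := h3 0
    refine PLChain.cons _ (a 1) _ s β (h1 0) (h2 0) (ha (by simp)) (by simpa using h) ?_
    have := ih (fun i => a i.succ) (ha.comp (Fin.strictMono_succ)) (fun i => h1 _) (fun i => h2 _)
      (fun i => by simpa using h3 i.succ)
    simpa using this

lemma PLChain.to_fin {F : ℝ → ℝ} {u v : ℝ} (h : PLChain F u v) :
    ∃ (n : ℕ) (a : Fin (n + 1) → ℝ), StrictMono a ∧ a 0 = u ∧ a (Fin.last n) = v ∧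
      (∀ i, a i ∈ ZInvM 2) ∧ (∀ i, F (a i) ∈ ZInvM 2) ∧
      ∀ i : Fin n, ∃ (s : ℤ) (β : ℝ), ∀ x ∈ Set.Icc (a i.castSucc) (a i.succ),
        F x = 2 ^ s * x + β := by
  induction h with
  | nil u h1 h2 =>
    exact ⟨0, fun _ => u, fun i j hij => absurd hij (by omega), rfl, rfl, fun _ => h1, fun _ => h2,
      fun i => i.elim0⟩
  | cons p q w s β h1 h2 h3 h4 h5 ih =>
    obtain ⟨n, a, ha, a0, al, i1, i2, i3⟩ := ih
    refine ⟨n + 1, Fin.cons p a, ?_, rfl, ?_, ?_, ?_, ?_⟩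
    · rw [Fin.strictMono_iff_lt_succ]
      intro i
      refine Fin.cases ?_ (fun j => ?_) i
      · simpa [a0] using h3
      · simpa using ha j.castSucc_lt_succ
    · rw [← Fin.succ_last, Fin.cons_succ, al]
    · exact fun i => Fin.cases (by simpa using h1) (fun j => by simpa using i1 j) i
    · exact fun i => Fin.cases (by simpa using h2) (fun j => by simpa using i2 j) i
    · intro i
      refine Fin.cases ⟨s, β, by simpa [a0] using h4⟩ (fun j => ?_) i
      simpa using i3 j

lemma isPLmLift_iff {r r' : ℝ} {F : ℝ → ℝ} : IsPLmLift 2 r r' F ↔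
    StrictMono F ∧ (∀ x : ℝ, F (x + r) = F x + r') ∧ PLChain F 0 r := by
  refine and_congr_right fun _ => and_congr_right fun _ => ⟨?_, fun h => ?_⟩
  · rintro ⟨n, a, ha, a0, al, h1, h2, h3⟩
    rw [← a0, ← al]
    exact PLChain.of_fin n a ha h1 h2 (by simpa using h3)
  · simpa using h.to_fin

lemma IsPLmLift.comp {r r' r'' : ℝ} {F G : ℝ → ℝ} (hr' : r' ∈ ZInvM 2)
    (hr'' : r'' ∈ ZInvM 2) (h0' : 0 < r')
    (hG : IsPLmLift 2 r' r'' G) (hF : IsPLmLift 2 r r' F) :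
    IsPLmLift 2 r r'' (fun x => G (F x)) := by
  rw [isPLmLift_iff] at *
  obtain ⟨f1, f2, f3⟩ := hF
  obtain ⟨g1, g2, g3⟩ := hG
  exact ⟨g1.comp f1, fun x => by simp only [f2, g2], f3.comp f1.monotone
    (PLChain.of_equivariant h0' hr' hr'' g2 g3 f3.left.2 f3.right.2 (f1.monotone f3.le))⟩

lemma IsPLmLift.inv {r r' : ℝ} {e : ℝ ≃o ℝ} (hr : r ∈ ZInvM 2)
    (hr' : r' ∈ ZInvM 2) (h0' : 0 < r')
    (he : IsPLmLift 2 r r' e) : IsPLmLift 2 r' r e.symm := by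
  rw [isPLmLift_iff] at *
  obtain ⟨f1, f2, f3⟩ := he
  have heq : ∀ y, e.symm (y + r') = e.symm y + r := fun y => by
    rw [OrderIso.symm_apply_eq, f2, e.apply_symm_apply]
  have hc : PLChain e.symm (e 0) (e r) := f3.inv f1 e.symm_apply_apply e.apply_symm_apply
  have hc0 : PLChain e.symm 0 r' := by
    have e0 : e r = e 0 + r' := by simpa using f2 0
    have hd : e 0 ∈ ZInvM 2 := f3.left.2
    -- shift the fundamental domain `[e 0, e 0 + r']` by `-e 0`, through the shifted map
    have hs : PLChain (fun x => e.symm (x + e 0)) 0 r' := by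
      refine PLChain.comp (F := fun x => x + e 0) (G := e.symm) (fun _ _ h => by simpa using h) ?_ ?_
      · have d0 : (0 : ℝ) ∈ ZInvM 2 := f3.left.1
        exact PLChain.single d0 (by simpa using hd) hr' (dy_add hr' hd) h0'.le 0 (e 0)
          (fun x _ => by simp)
      · simpa [e0, add_comm] using hc
    have hall := PLChain.of_equivariant h0' hr' hr
      (fun x => by simp only [add_right_comm x r', heq]) hs (dy_neg hd)
      (dy_sub hr' hd) (by linarith)
    have := PLChain.comp (F := fun x => x - e 0) (G := fun x => e.symm (x + e 0))
      (u := 0) (w := r') (fun _ _ h => by simpa using h)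
      (PLChain.single f3.left.1 (by simpa using dy_neg hd) hr' (dy_sub hr' hd) h0'.le 0 (-e 0)
          (fun x _ => by simp [sub_eq_add_neg])) (by simpa using hall)
    simpa using this
  exact ⟨e.symm.strictMono, heq, hc0⟩

/-! ### A `PL_2` homeomorphism between circles of lengths `r` and `1` -/

/-- A `PL_2` map of `[0, r + 1]` onto `[0, 1]`, built by recursion on `r`: send `[0, 1]` affinely
onto `[0, 1/2]`, and the rest onto `[1/2, 1]` by the previous map with its values halved. -/
lemma exists_chain (r : ℕ) : ∃ h : ℝ → ℝ, StrictMono h ∧ Continuous h ∧ h 0 = 0 ∧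
    h ((r + 1 : ℕ) : ℝ) = 1 ∧ PLChain h 0 ((r + 1 : ℕ) : ℝ) := by
  have d0 : (0 : ℝ) ∈ ZInvM 2 := by simpa using dy_int 0
  have d1 : (1 : ℝ) ∈ ZInvM 2 := by simpa using dy_int 1
  induction r with
  | zero =>
    refine ⟨id, strictMono_id, continuous_id, rfl, by simp, ?_⟩
    exact PLChain.single d0 d0 (by simpa using d1) (by simpa using d1) (by simp) 0 0 (by simp)
  | succ r ih =>
    obtain ⟨h, hm, hc, h0, h1, hp⟩ := ih
    obtain ⟨R, hR⟩ : ∃ R : ℝ, R = ((r + 1 : ℕ) : ℝ) := ⟨_, rfl⟩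
    have hR' : ((r + 1 + 1 : ℕ) : ℝ) = R + 1 := by rw [hR]; push_cast; ring
    have hR0 : 0 < R := by rw [hR]; positivity
    rw [← hR] at h1 hp
    rw [hR']
    have d2 : (2 : ℝ)⁻¹ ∈ ZInvM 2 := by simpa using dy_mul_zpow d1 (-1)
    let k : ℝ → ℝ := fun x => if x ≤ 1 then x / 2 else 1 / 2 + h (x - 1) / 2
    have kl : ∀ x, x ≤ 1 → k x = x / 2 := fun x hx => if_pos hx
    have kr : ∀ x, 1 ≤ x → k x = 1 / 2 + h (x - 1) / 2 := fun x hx => by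
      rcases hx.eq_or_lt with rfl | hx
      · simp [k, h0]
      · exact if_neg hx.not_ge
    refine ⟨k, ?_, ?_, ?_, ?_, ?_⟩
    · intro x y hxy
      rcases le_total y 1 with hy | hy
      · rw [kl x (by linarith), kl y hy]; linarith
      · rcases le_total 1 x with hx | hx
        · rw [kr x hx, kr y hy]
          have := hm (show x - 1 < y - 1 by linarith)
          linarith
        · rw [kl x hx, kr y hy]
          have h2 := hm.monotone (show (0 : ℝ) ≤ y - 1 by linarith)
          rw [h0] at h2
          rcases hx.eq_or_lt with rfl | hx
          · have := hm (show (0 : ℝ) < y - 1 by linarith)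
            linarith
          · linarith
    · refine Continuous.if_le (by fun_prop) (by fun_prop) (by fun_prop) (by fun_prop) ?_
      rintro x rfl
      simp [h0]
    · rw [kl 0 (by norm_num)]; simp
    · rw [kr _ (by linarith), add_sub_cancel_right, h1]; norm_num
    · have c1 : PLChain k 0 1 := by
        refine PLChain.single d0 (by rw [kl 0 (by norm_num)]; simpa using d0) d1
          (by rw [kl 1 le_rfl]; simpa using d2) (by norm_num) (-1) 0 fun x hx => ?_
        rw [kl x hx.2, zpow_neg_one]; ring
      have dR : R ∈ ZInvM 2 := hp.right.1
      have c2 : PLChain (fun x => h (x - 1)) 1 (R + 1) := by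
        refine PLChain.comp (F := fun x => x - 1) (G := h) (fun _ _ h => by simpa using h)
          (PLChain.single d1 (by simpa using d0) (dy_add dR d1) (by simpa using dR)
            (by linarith) 0 (-1) fun x _ => by simp [sub_eq_add_neg]) ?_
        simpa using hp
      have c3 : PLChain (fun x => 2⁻¹ * h (x - 1) + 2⁻¹) 1 (R + 1) := by
        refine PLChain.comp (F := fun x => h (x - 1)) (G := fun y => 2⁻¹ * y + 2⁻¹)
          (fun _ _ i => hm.monotone (by linarith)) c2 ?_
        rw [sub_self, add_sub_cancel_right, h0, h1]
        exact PLChain.single d0 (by simpa using d2) d1 (by norm_num; exact d1) (by norm_num)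
          (-1) 2⁻¹ fun x _ => by simp
      exact c1.trans (c3.congr fun x hx => by rw [kr x hx.1]; ring)

lemma exists_iso (r : ℕ) (hr : 0 < r) :
    ∃ e : ℝ ≃o ℝ, IsPLmLift 2 (r : ℝ) ((1 : ℕ) : ℝ) e := by
  obtain ⟨k, rfl⟩ := Nat.exists_eq_succ_of_ne_zero hr.ne'
  obtain ⟨h, hm, hc, h0, h1, hp⟩ := exists_chain k
  rw [Nat.succ_eq_add_one]
  obtain ⟨R, hR⟩ : ∃ R : ℝ, R = ((k + 1 : ℕ) : ℝ) := ⟨_, rfl⟩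
  have hR0 : 0 < R := by rw [hR]; positivity
  rw [← hR] at h1 hp ⊢
  -- the periodic extension of `h` from the fundamental domain `[0, R)`
  let H : ℝ → ℝ := fun x => ⌊x / R⌋ + h (x - ⌊x / R⌋ * R)
  have fl : ∀ x, 0 ≤ x - ⌊x / R⌋ * R ∧ x - ⌊x / R⌋ * R < R := fun x => by
    have a1 := Int.floor_le (x / R)
    have a2 := Int.lt_floor_add_one (x / R)
    rw [le_div_iff₀ hR0] at a1
    rw [div_lt_iff₀ hR0] at a2
    constructor <;> linarith
  have Hq : ∀ (q : ℤ) (t : ℝ), 0 ≤ t → t < R → H (t + q * R) = q + h t := by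
    intro q t t0 t1
    have : ⌊(t + q * R) / R⌋ = q := by
      rw [Int.floor_eq_iff, le_div_iff₀ hR0, div_lt_iff₀ hR0]
      constructor <;> linarith
    simp only [H, this, add_sub_cancel_right]
  have hmono : StrictMono H := by
    intro x y hxy
    obtain ⟨a1, a2⟩ := fl x
    obtain ⟨b1, b2⟩ := fl y
    have hle : ⌊x / R⌋ ≤ ⌊y / R⌋ := Int.floor_le_floor (by gcongr)
    rcases hle.eq_or_lt with heq | hlt
    · simp only [H, heq]
      have := hm (show x - ⌊y / R⌋ * R < y - ⌊y / R⌋ * R by linarith)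
      linarith
    · have c1 : (⌊x / R⌋ : ℝ) + 1 ≤ ⌊y / R⌋ := by exact_mod_cast hlt
      have c2 := hm a2
      have c3 := hm.monotone b1
      simp only [H]
      linarith
  have heqv : ∀ x, H (x + R) = H x + ((1 : ℕ) : ℝ) := by
    intro x
    obtain ⟨a1, a2⟩ := fl x
    have := Hq (⌊x / R⌋ + 1) _ a1 a2
    push_cast at this ⊢
    rw [show x + R = x - ⌊x / R⌋ * R + (⌊x / R⌋ + 1) * R by ring, this]
    simp only [H]
    ring
  have hsurj : Function.Surjective H := by
    intro y
    have y0 := Int.floor_le y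
    have y1 := Int.lt_floor_add_one y
    obtain ⟨t, ht, hty⟩ := intermediate_value_Ico hR0.le hc.continuousOn
      (show y - ⌊y⌋ ∈ Set.Ico (h 0) (h R) by rw [h0, h1]; constructor <;> linarith)
    exact ⟨t + ⌊y⌋ * R, by rw [Hq _ _ ht.1 ht.2, hty]; ring⟩
  refine ⟨StrictMono.orderIsoOfSurjective H hmono hsurj, ?_⟩
  rw [StrictMono.coe_orderIsoOfSurjective, isPLmLift_iff]
  refine ⟨hmono, heqv, hp.congr fun x hx => ?_⟩
  rcases hx.2.eq_or_lt with rfl | hlt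
  · have := Hq 1 0 le_rfl hR0
    simp only [Int.cast_one, one_mul, zero_add, h0, add_zero] at this
    rw [this, h1]
  · have := Hq 0 x hx.1 hlt
    simpa using this.symm

/-! ### Conjugation -/

/-- The bijection of circles induced by an equivariant order isomorphism of the line. -/
noncomputable def circleEquiv {r r' : ℝ} (e : ℝ ≃o ℝ) (h : ∀ x, e (x + r) = e x + r')
    (h' : ∀ y, e.symm (y + r') = e.symm y + r) : AddCircle r ≃ AddCircle r' where
  toFun := Function.Periodic.lift (f := fun x => ((e x : ℝ) : AddCircle r')) (c := r)
    (fun x => by simp [h])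
  invFun := Function.Periodic.lift (f := fun x => ((e.symm x : ℝ) : AddCircle r)) (c := r')
    (fun x => by simp [h'])
  left_inv x := by
    induction x using QuotientAddGroup.induction_on with
    | H x => exact congrArg _ (e.symm_apply_apply x)
  right_inv x := by
    induction x using QuotientAddGroup.induction_on with
    | H x => exact congrArg _ (e.apply_symm_apply x)

lemma InT.conj {r r' : ℕ} (h0 : 0 < r) {e g : ℝ → ℝ} {E : AddCircle (r : ℝ) ≃ AddCircle (r' : ℝ)}
    (he : IsPLmLift 2 r r' e) (hg : IsPLmLift 2 r' r g)
    (hE : ∀ x : ℝ, E x = (e x : ℝ)) (hE' : ∀ y : ℝ, E.symm y = (g y : ℝ))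
    {f : Equiv.Perm (AddCircle (r : ℝ))} (hf : InT r 2 f) : InT r' 2 (E.permCongr f) := by
  obtain ⟨F, hF, hfF⟩ := hf
  have dr : (r : ℝ) ∈ ZInvM 2 := by simpa using dy_int r
  have dr' : (r' : ℝ) ∈ ZInvM 2 := by simpa using dy_int r'
  have p : (0 : ℝ) < r := by exact_mod_cast h0
  refine ⟨fun x => e (F (g x)), he.comp dr dr' p (hF.comp dr dr p hg), fun x => ?_⟩
  rw [Equiv.permCongr_apply, hE', hfF, hE]

/-- For every positive integer `r`, the group `T_{r,2}` is isomorphic to the Thompson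
group `T = T_{1,2}`. -/
theorem T_r_two_iso_thompson (r : ℕ) (hr : 0 < r) :
    Nonempty (TGroup r 2 ≃* TGroup 1 2) := by
  obtain ⟨e, he⟩ := exists_iso r hr
  have dr : (r : ℝ) ∈ ZInvM 2 := by simpa using dy_int r
  have d1 : ((1 : ℕ) : ℝ) ∈ ZInvM 2 := by simpa using dy_int 1
  have hg := he.inv dr d1 (by norm_num)
  let E : AddCircle (r : ℝ) ≃ AddCircle ((1 : ℕ) : ℝ) := circleEquiv e he.2.1 hg.2.1
  have hmap : (TGroup r 2).map E.permCongrHom.toMonoidHom = TGroup 1 2 := by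
    rw [TGroup, TGroup, MonoidHom.map_closure]
    congr 1
    ext f
    constructor
    · rintro ⟨f, hf, rfl⟩
      exact InT.conj hr he hg (fun _ => rfl) (fun _ => rfl) hf
    · intro hf
      exact ⟨E.permCongr.symm f,
        InT.conj (E := E.symm) one_pos hg he (fun _ => rfl) (fun _ => rfl) hf,
        E.permCongr.apply_symm_apply f⟩
  exact ⟨(E.permCongrHom.subgroupMap (TGroup r 2)).trans (MulEquiv.subgroupCongr hmap)⟩
end
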